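/- arXiv:2511.16173 — 4 statements merged into one kernel-verified Lean document; each statement's English description precedes it below -/
import Mathlib

section
/- Let N ≥ 2 be an integer and set k = (N−1)/2. For every real γ > 0, the function ℂ^N → [0,∞], (z₁,…,z_N) ↦ ∏_{1≤i<j≤N} |z_i − z_j|^{−2γ/k}, is locally integrable on ℂ^N if and only if γ < 1 − 1/N. (Equivalently, the microscopic stability threshold γ^(N)(ℙ¹) = lct((ℙ¹)^N; 𝒟^(N)) equals 1 − 1/N, so ℙ¹ is Gibbs semistable.) -/
open MeasureTheory Topology
open scoped ENNReal

/-!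
Write `N = n + 1` and let `d` be the real dimension of `E`, so `d = 2` for `ℂ`. In the coordinates
`(z i, (z j - z i)_{j ≠ i})` a configuration splits into a base point and relative positions.

If `t * N < 2 * d`, the density `∏_{a < b} ‖z a - z b‖ ^ (-t)` is the geometric mean over `i` of the
star densities `∏_{j ≠ i} ‖z j - z i‖ ^ (-t * N / 2)`, hence at most their sum. In relative
coordinates each star is a product of `n` functions `‖·‖ ^ (-t * N / 2)` on `E`, which are locally
integrable because `t * N / 2 < d`.

If `2 * d ≤ t * N`, all `n * N / 2` factors blow up together on the small diagonal: every distance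
is at most twice the norm of the relative positions `w ∈ E ^ n`, so near the origin the density
dominates a multiple of `‖w‖ ^ (-t * n * N / 2)`, whose exponent `t * n * N / 2` is at least the
dimension `n * d` of `E ^ n`.
-/

namespace GibbsStability

section GibbsDensity

variable {E : Type*} [SeminormedAddCommGroup E] {N n : ℕ}

/-- The unnormalized Gibbs density `∏_{i < j} ‖z i - z j‖ ^ (-t)` of a logarithmic pair interaction;
on `ℂ` it is the power `-t` of the absolute value of the Vandermonde determinant. It takes the value
`∞` on the diagonals when `0 < t`. -/
noncomputable def gibbsDensity (t : ℝ) (z : Fin N → E) : ℝ≥0∞ :=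
  ∏ a ∈ Finset.univ.filter (fun a : Fin N × Fin N => a.1 < a.2), ‖z a.1 - z a.2‖ₑ ^ (-t)

/-- The positions, relative to the `i`-th point of a configuration, of the remaining points. -/
def relativePositions {G : Type*} [Sub G] (i : Fin (n + 1)) (z : Fin (n + 1) → G) : Fin n → G :=
  fun j => z (i.succAbove j) - z i

theorem gibbsDensity_pow (t : ℝ) (z : Fin N → E) (m : ℕ) :
    gibbsDensity t z ^ m = gibbsDensity (t * m) z := by
  simp only [gibbsDensity, ← Finset.prod_pow, ← ENNReal.rpow_mul_natCast, neg_mul]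

theorem prod_prod_succAbove_eq_prod_lt_sq {M : Type*} [CommMonoid M]
    (f : Fin (n + 1) → Fin (n + 1) → M) (hf : ∀ i j, f i j = f j i) :
    ∏ i, ∏ j, f (i.succAbove j) i =
      (∏ a ∈ Finset.univ.filter (fun a : Fin (n + 1) × Fin (n + 1) => a.1 < a.2),
        f a.1 a.2) ^ 2 := by
  calc ∏ i, ∏ j, f (i.succAbove j) i
      = ∏ i, ∏ j ∈ {i}ᶜ, f j i := by
        simp only [← Fin.image_succAbove_univ,
          Finset.prod_image Fin.succAbove_right_injective.injOn]
    _ = ∏ i, ∏ j ∈ Finset.Ioi i, f i j ^ 2 := by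
        rw [← Finset.prod_prod_Ioi_mul_eq_prod_prod_off_diag]
        simp only [hf, sq]
    _ = _ := by
        rw [← Finset.prod_pow]
        exact (Finset.prod_finset_product' _ _ _ (by simp)).symm

theorem prod_prod_enorm_relativePositions_rpow (s : ℝ) (z : Fin (n + 1) → E) :
    ∏ i, ∏ j, ‖relativePositions i z j‖ₑ ^ (-s) = gibbsDensity s z ^ 2 :=
  prod_prod_succAbove_eq_prod_lt_sq (fun i j => ‖z i - z j‖ₑ ^ (-s))
    fun i j => by rw [enorm_sub_rev]

theorem gibbsDensity_le_sum_prod_relativePositions (t : ℝ) (z : Fin (n + 1) → E) :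
    gibbsDensity t z ≤ ∑ i, ∏ j, ‖relativePositions i z j‖ₑ ^ (-(t * (n + 1) / 2)) := by
  set star : Fin (n + 1) → ℝ≥0∞ := fun i => ∏ j, ‖relativePositions i z j‖ₑ ^ (-(t * (n + 1) / 2))
  refine (ENNReal.pow_le_pow_left_iff n.succ_ne_zero).1 ?_
  calc gibbsDensity t z ^ (n + 1)
      = gibbsDensity (t * (n + 1) / 2) z ^ 2 := by
        rw [gibbsDensity_pow, gibbsDensity_pow]
        push_cast
        rw [div_mul_cancel₀ _ two_ne_zero]
    _ = ∏ i, star i := (prod_prod_enorm_relativePositions_rpow _ z).symm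
    _ ≤ (∑ i, star i) ^ (n + 1) := by
        simpa using Finset.prod_le_pow_card Finset.univ star (∑ i, star i)
          fun i _ => Finset.single_le_sum_of_canonicallyOrdered (Finset.mem_univ i)

theorem norm_sub_le_norm_relativePositions (i k : Fin (n + 1)) (z : Fin (n + 1) → E) :
    ‖z k - z i‖ ≤ ‖relativePositions i z‖ := by
  rcases Fin.eq_self_or_eq_succAbove i k with rfl | ⟨j, rfl⟩
  · simp
  · exact norm_le_pi_norm (relativePositions i z) j

theorem enorm_sub_le_two_mul_enorm_relativePositions (i k l : Fin (n + 1)) (z : Fin (n + 1) → E) :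
    ‖z k - z l‖ₑ ≤ 2 * ‖relativePositions i z‖ₑ := by
  have base (k : Fin (n + 1)) : ‖z k - z i‖ₑ ≤ ‖relativePositions i z‖ₑ :=
    enorm_le_iff_norm_le.2 (norm_sub_le_norm_relativePositions i k z)
  calc ‖z k - z l‖ₑ = ‖(z k - z i) - (z l - z i)‖ₑ := by rw [sub_sub_sub_cancel_right]
    _ ≤ ‖z k - z i‖ₑ + ‖z l - z i‖ₑ := enorm_sub_le
    _ ≤ 2 * ‖relativePositions i z‖ₑ := by rw [two_mul]; exact add_le_add (base k) (base l)

theorem enorm_relativePositions_rpow_le_gibbsDensity {t : ℝ} (ht : 0 ≤ t) (i : Fin (n + 1))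
    (z : Fin (n + 1) → E) :
    (2 * ‖relativePositions i z‖ₑ) ^ (-(t * (n * (n + 1) / 2))) ≤ gibbsDensity t z := by
  have card_pairs : (n * (n + 1) / 2 : ℝ) =
      (Finset.univ.filter fun a : Fin (n + 1) × Fin (n + 1) => a.1 < a.2).card := by
    rw [Fintype.card_product_filter_lt, Fintype.card_fin, Nat.cast_choose_two]
    push_cast
    ring
  rw [card_pairs, ← neg_mul, ENNReal.rpow_mul_natCast, ← Finset.prod_const]
  refine Finset.prod_le_prod' fun a _ => ?_
  rw [ENNReal.rpow_neg, ENNReal.rpow_neg, ENNReal.inv_le_inv]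
  exact ENNReal.rpow_le_rpow (enorm_sub_le_two_mul_enorm_relativePositions i a.1 a.2 z) ht

end GibbsDensity

section ProductMeasure

theorem lintegral_pi_prod_eq_prod_lintegral {n : ℕ} {α : Fin n → Type*}
    [∀ i, MeasurableSpace (α i)] (μ : ∀ i, Measure (α i)) [∀ i, SigmaFinite (μ i)]
    {f : ∀ i, α i → ℝ≥0∞} (hf : ∀ i, Measurable (f i)) :
    ∫⁻ x, ∏ i, f i (x i) ∂Measure.pi μ = ∏ i, ∫⁻ x, f i x ∂μ i := by
  induction n with
  | zero => simp
  | succ n ih =>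
    calc ∫⁻ x, ∏ i, f i (x i) ∂Measure.pi μ
        = ∫⁻ p, f 0 p.1 * ∏ j : Fin n, f j.succ (p.2 j)
            ∂(μ 0).prod (Measure.pi fun j => μ (Fin.succ j)) := by
          simp only [Fin.prod_univ_succ]
          exact (measurePreserving_piFinSuccAbove μ 0).lintegral_comp
            (f := fun p => f 0 p.1 * ∏ j : Fin n, f j.succ (p.2 j)) (by fun_prop)
      _ = (∫⁻ x, f 0 x ∂μ 0) * ∏ j : Fin n, ∫⁻ x, f j.succ x ∂μ j.succ := by
          rw [← ih (fun j => μ j.succ) fun j => hf j.succ]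
          exact lintegral_prod_mul (ν := Measure.pi fun j : Fin n => μ j.succ)
            (g := fun w => ∏ j, f j.succ (w j)) (hf 0).aemeasurable
            (Measurable.aemeasurable (by fun_prop))
      _ = ∏ i, ∫⁻ x, f i x ∂μ i := (Fin.prod_univ_succ fun i => ∫⁻ x, f i x ∂μ i).symm

variable {n : ℕ} {G : Type*} [AddGroup G] [MeasurableSpace G] [MeasurableAdd G]
  [MeasurableSub₂ G] (μ : Measure G) [SigmaFinite μ] [μ.IsAddRightInvariant]

theorem measurePreserving_apply_relativePositions (i : Fin (n + 1)) :
    MeasurePreserving (fun z : Fin (n + 1) → G => (z i, relativePositions i z))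
      (Measure.pi fun _ => μ) (μ.prod (Measure.pi fun _ => μ)) := by
  have shear : MeasurePreserving (fun p : G × (Fin n → G) => (p.1, p.2 - fun _ => p.1))
      (μ.prod (Measure.pi fun _ => μ)) (μ.prod (Measure.pi fun _ => μ)) :=
    (MeasurePreserving.id μ).skew_product (g := fun x w => w - fun _ => x)
      (by unfold Function.uncurry; fun_prop)
      (Filter.Eventually.of_forall fun x => map_sub_right_eq_self _ _)
  exact shear.comp (measurePreserving_piFinSuccAbove (fun _ => μ) i)

theorem setLIntegral_comp_relativePositions (i : Fin (n + 1)) {A : Set G} {B : Set (Fin n → G)}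
    (hA : MeasurableSet A) (hB : MeasurableSet B) {f : (Fin n → G) → ℝ≥0∞} (hf : Measurable f) :
    ∫⁻ z in (fun z => (z i, relativePositions i z)) ⁻¹' A ×ˢ B, f (relativePositions i z)
        ∂Measure.pi (fun _ => μ) =
      μ A * ∫⁻ w in B, f w ∂Measure.pi fun _ => μ := by
  rw [(measurePreserving_apply_relativePositions μ i).setLIntegral_comp_preimage
      (f := fun p => f p.2) (hA.prod hB) (hf.comp measurable_snd),
    setLIntegral_prod (fun p => f p.2) (hf.comp measurable_snd).aemeasurable]
  dsimp only
  rw [setLIntegral_const, mul_comm]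

end ProductMeasure

section RelativeBalls

variable {E : Type*} [SeminormedAddCommGroup E] {n : ℕ}

theorem ball_zero_subset_preimage_relativePositions (i : Fin (n + 1)) (R : ℝ) :
    Metric.ball (0 : Fin (n + 1) → E) R ⊆
      (fun z => (z i, relativePositions i z)) ⁻¹'
        Metric.ball (0 : E) R ×ˢ Metric.ball (0 : Fin n → E) (2 * R) := by
  intro z hz
  have hR : 0 < R := Metric.pos_of_mem_ball hz
  rw [mem_ball_zero_iff, pi_norm_lt_iff hR] at hz
  refine ⟨mem_ball_zero_iff.2 (hz i), mem_ball_zero_iff.2 ?_⟩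
  refine (pi_norm_lt_iff (by positivity)).2 fun j => ?_
  calc ‖z (i.succAbove j) - z i‖ ≤ ‖z (i.succAbove j)‖ + ‖z i‖ := norm_sub_le _ _
    _ < 2 * R := by linarith [hz i, hz (i.succAbove j)]

theorem preimage_relativePositions_subset_ball_zero (i : Fin (n + 1)) (r : ℝ) :
    (fun z => (z i, relativePositions i z)) ⁻¹'
        Metric.ball (0 : E) r ×ˢ Metric.ball (0 : Fin n → E) r ⊆
      Metric.ball (0 : Fin (n + 1) → E) (2 * r) := by
  rintro z ⟨hi, hrel⟩
  rw [mem_ball_zero_iff] at hi hrel ⊢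
  refine (pi_norm_lt_iff (by linarith [norm_nonneg (z i)])).2 fun k => ?_
  calc ‖z k‖ ≤ ‖z k - z i‖ + ‖z i‖ := norm_le_norm_sub_add _ _
    _ < 2 * r := by linarith [norm_sub_le_norm_relativePositions i k z]

end RelativeBalls

section Integrability

open Module

variable {E : Type*} [NormedAddCommGroup E] [NormedSpace ℝ E] [FiniteDimensional ℝ E]
  [Nontrivial E] [MeasurableSpace E] [BorelSpace E] (μ : Measure E) [μ.IsAddHaarMeasure] {n : ℕ}

theorem integrableOn_ball_norm_rpow_neg_iff {r : ℝ} (hr : 0 < r) (s : ℝ) :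
    IntegrableOn (fun x : E => ‖x‖ ^ (-s)) (Metric.ball 0 r) μ ↔ s < finrank ℝ E := by
  rw [integrableOn_fun_norm_addHaar μ (f := fun y => y ^ (-s))]
  have radial : Set.EqOn (fun y : ℝ => y ^ (finrank ℝ E - 1) • y ^ (-s))
      (fun y => y ^ (finrank ℝ E - 1 - s : ℝ)) (Set.Ioo 0 r) := by
    intro y hy
    simp only [smul_eq_mul]
    rw [← Real.rpow_natCast, ← Real.rpow_add hy.1, Nat.cast_pred finrank_pos, sub_eq_add_neg _ s]
  rw [integrableOn_congr_fun radial measurableSet_Ioo,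
    intervalIntegral.integrableOn_Ioo_rpow_iff hr]
  constructor <;> intro h <;> linarith

theorem setLIntegral_ball_enorm_rpow_neg_ne_top_iff {r : ℝ} (hr : 0 < r) (s : ℝ) :
    ∫⁻ x in Metric.ball 0 r, ‖x‖ₑ ^ (-s) ∂μ ≠ ∞ ↔ s < finrank ℝ E := by
  have meas : Measurable fun x : E => ‖x‖ ^ (-s) := by fun_prop
  have enorm_rpow : ∀ᵐ x ∂μ.restrict (Metric.ball 0 r), ‖‖x‖ ^ (-s)‖ₑ = ‖x‖ₑ ^ (-s) := by
    filter_upwards [ae_restrict_of_ae (Measure.ae_ne μ 0)] with x hx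
    rw [Real.enorm_of_nonneg (by positivity), ← ENNReal.ofReal_rpow_of_pos (norm_pos_iff.2 hx),
      ofReal_norm]
  rw [← integrableOn_ball_norm_rpow_neg_iff μ hr s, IntegrableOn, Integrable,
    and_iff_right meas.aestronglyMeasurable, hasFiniteIntegral_iff_enorm,
    lintegral_congr_ae enorm_rpow, lt_top_iff_ne_top]

theorem setLIntegral_ball_mul_enorm_rpow_neg_eq_top {c : ℝ≥0∞} (hc : c ≠ ∞) {r s : ℝ}
    (hr : 0 < r) (hs : finrank ℝ E ≤ s) :
    ∫⁻ x in Metric.ball 0 r, (c * ‖x‖ₑ) ^ (-s) ∂μ = ∞ := by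
  have s_nonneg : 0 ≤ s := (Nat.cast_nonneg _).trans hs
  have radial : ∫⁻ x in Metric.ball 0 r, ‖x‖ₑ ^ (-s) ∂μ = ∞ :=
    not_ne_iff.1 fun h => hs.not_gt ((setLIntegral_ball_enorm_rpow_neg_ne_top_iff μ hr s).1 h)
  simp only [ENNReal.mul_rpow_of_ne_top hc enorm_ne_top]
  rw [lintegral_const_mul _ (by fun_prop), radial]
  exact ENNReal.mul_top (by simp [ENNReal.rpow_eq_zero_iff, hc, s_nonneg.not_gt])

theorem setLIntegral_ball_prod_relativePositions_ne_top (i : Fin (n + 1)) {s R : ℝ}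
    (hs : s < finrank ℝ E) (hR : 0 < R) :
    ∫⁻ z in Metric.ball 0 R, ∏ j, ‖relativePositions i z j‖ₑ ^ (-s)
      ∂Measure.pi (fun _ => μ) ≠ ∞ := by
  refine ne_top_of_le_ne_top ?_
    (lintegral_mono_set (ball_zero_subset_preimage_relativePositions i R))
  rw [setLIntegral_comp_relativePositions μ i measurableSet_ball measurableSet_ball
    (f := fun w : Fin n → E => ∏ j, ‖w j‖ₑ ^ (-s)) (by fun_prop)]
  refine ENNReal.mul_ne_top measure_ball_lt_top.ne ?_
  rw [ball_pi _ (by positivity), Measure.restrict_pi_pi,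
    lintegral_pi_prod_eq_prod_lintegral _ (f := fun _ x => ‖x‖ₑ ^ (-s)) fun _ => by fun_prop]
  exact ENNReal.prod_ne_top fun _ _ =>
    (setLIntegral_ball_enorm_rpow_neg_ne_top_iff μ (by positivity) s).2 hs

theorem setLIntegral_ball_gibbsDensity_ne_top {t R : ℝ}
    (ht : t * (n + 1) < 2 * finrank ℝ E) (hR : 0 < R) :
    ∫⁻ z : Fin (n + 1) → E in Metric.ball 0 R, gibbsDensity t z ∂Measure.pi (fun _ => μ) ≠ ∞ := by
  refine ne_top_of_le_ne_top ?_ (lintegral_mono (gibbsDensity_le_sum_prod_relativePositions t))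
  rw [lintegral_finsetSum _ fun i _ => by unfold relativePositions; fun_prop]
  exact ENNReal.sum_ne_top.2 fun i _ =>
    setLIntegral_ball_prod_relativePositions_ne_top μ i (by linarith) hR

theorem setLIntegral_gibbsDensity_eq_top {t : ℝ} (hn : n ≠ 0)
    (ht : 2 * finrank ℝ E ≤ t * (n + 1)) {s : Set (Fin (n + 1) → E)} (hs : s ∈ 𝓝 0) :
    ∫⁻ z in s, gibbsDensity t z ∂Measure.pi (fun _ => μ) = ∞ := by
  obtain ⟨ε, hε, hεs⟩ := Metric.mem_nhds_iff.1 hs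
  have : NeZero n := ⟨hn⟩
  set T : ℝ := t * (n * (n + 1) / 2)
  have ht0 : 0 ≤ t := nonneg_of_mul_nonneg_left (le_trans (by positivity) ht) (by positivity)
  have hT : (finrank ℝ (Fin n → E) : ℝ) ≤ T := by
    rw [finrank_pi_fintype, Finset.sum_const, Finset.card_univ, Fintype.card_fin, smul_eq_mul,
      Nat.cast_mul]
    have := mul_le_mul_of_nonneg_left ht n.cast_nonneg
    linarith [show T = n * (t * (n + 1)) / 2 by ring]
  have radial : ∫⁻ w : Fin n → E in Metric.ball 0 (ε / 2), (2 * ‖w‖ₑ) ^ (-T)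
      ∂Measure.pi (fun _ => μ) = ∞ :=
    setLIntegral_ball_mul_enorm_rpow_neg_eq_top _ ENNReal.ofNat_ne_top (half_pos hε) hT
  rw [eq_top_iff]
  calc ∞ = μ (Metric.ball 0 (ε / 2)) * ∞ :=
        (ENNReal.mul_top (Metric.measure_ball_pos μ 0 (half_pos hε)).ne').symm
    _ = ∫⁻ z in (fun z => (z 0, relativePositions 0 z)) ⁻¹'
          Metric.ball (0 : E) (ε / 2) ×ˢ Metric.ball (0 : Fin n → E) (ε / 2),
          (2 * ‖relativePositions 0 z‖ₑ) ^ (-T) ∂Measure.pi (fun _ => μ) := by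
        rw [← radial]
        exact (setLIntegral_comp_relativePositions μ 0 measurableSet_ball measurableSet_ball
          (f := fun w => (2 * ‖w‖ₑ) ^ (-T)) (by fun_prop)).symm
    _ ≤ ∫⁻ z in s, gibbsDensity t z ∂Measure.pi (fun _ => μ) := by
        refine lintegral_mono' (Measure.restrict_mono ?_ le_rfl)
          (enorm_relativePositions_rpow_le_gibbsDensity ht0 0)
        refine (preimage_relativePositions_subset_ball_zero 0 (ε / 2)).trans ?_
        rwa [mul_div_cancel₀ ε two_ne_zero]

end Integrability

theorem exponent_mul_lt_iff_lt_one_sub_one_div {N : ℕ} (hN : 2 ≤ N) (γ : ℝ) :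
    2 * γ / (((N : ℝ) - 1) / 2) * N < 2 * 2 ↔ γ < 1 - 1 / (N : ℝ) := by
  have hN' : (2 : ℝ) ≤ N := by exact_mod_cast hN
  rw [one_sub_div (by positivity), lt_div_iff₀ (by positivity), div_mul_eq_mul_div,
    div_lt_iff₀ (by linarith)]
  constructor <;> intro h <;> linarith

end GibbsStability

theorem gibbs_semistable_threshold_P1_general {E : Type*} [NormedAddCommGroup E] [NormedSpace ℝ E]
    [FiniteDimensional ℝ E] [Nontrivial E] [MeasurableSpace E] [BorelSpace E] (μ : Measure E)
    [μ.IsAddHaarMeasure] {N : ℕ} (hN : 2 ≤ N) (t : ℝ) :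
    (∀ p : Fin N → E, ∃ s ∈ 𝓝 p,
        ∫⁻ z in s, GibbsStability.gibbsDensity t z ∂Measure.pi (fun _ => μ) ≠ ∞) ↔
      t * N < 2 * Module.finrank ℝ E := by
  obtain ⟨n, rfl⟩ : ∃ n, N = n + 1 := ⟨N - 1, by omega⟩
  push_cast
  refine ⟨fun h => ?_, fun ht p => ?_⟩
  · by_contra! ht
    obtain ⟨s, hs, hfin⟩ := h 0
    exact hfin (GibbsStability.setLIntegral_gibbsDensity_eq_top μ (by omega) ht hs)
  · refine ⟨Metric.ball 0 (‖p‖ + 1), Metric.isOpen_ball.mem_nhds ?_,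
      GibbsStability.setLIntegral_ball_gibbsDensity_ne_top μ ht (by positivity)⟩
    exact mem_ball_zero_iff.2 (lt_add_one _)

/-- **Gibbs semistability of ℙ¹.** For `N ≥ 2`, `k = (N-1)/2` and `γ > 0`, the function
`z ↦ ∏_{i<j} |z_i - z_j| ^ (-2γ/k)` (with value `∞` on diagonals) is locally integrable on
`ℂ^N` if and only if `γ < 1 - 1/N`; i.e. the microscopic stability threshold
`γ^(N)(ℙ¹) = lct((ℙ¹)^N; 𝒟^(N))` equals `1 - 1/N`. -/
theorem gibbs_semistable_threshold_P1 (N : ℕ) (hN : 2 ≤ N) (γ : ℝ) (hγ : 0 < γ) :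
    (∀ p : Fin N → ℂ, ∃ s ∈ 𝓝 p,
        (∫⁻ z in s,
          ∏ a ∈ Finset.univ.filter (fun a : Fin N × Fin N => a.1 < a.2),
            (ENNReal.ofReal ‖z a.1 - z a.2‖) ^ (-(2 * γ / (((N : ℝ) - 1) / 2))) ∂volume) ≠ ∞) ↔
      γ < 1 - 1 / (N : ℝ) := by
  simpa only [GibbsStability.gibbsDensity, volume_pi, ofReal_norm, Complex.finrank_real_complex,
    Nat.cast_ofNat, GibbsStability.exponent_mul_lt_iff_lt_one_sub_one_div hN] using
    gibbs_semistable_threshold_P1_general (volume : Measure ℂ) hN (2 * γ / ((N - 1) / 2))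
end

section
/- Let N ≥ 2, let p ∈ ℂ^N, and let m := max_{w ∈ ℂ} #{i : p_i = w} be the maximal multiplicity among the coordinates of p; assume m ≥ 2. For every real c > 0, the function z ↦ ∏_{1≤i<j≤N} |z_i − z_j|^{−2c} is Lebesgue integrable on some neighborhood of p in ℂ^N if and only if c < 2/m. -/
open MeasureTheory Topology
open scoped ENNReal Classical

/-! Both directions are estimates along stars. Choosing in each cluster of equal coordinates of `p`
a root gives an idempotent `ρ : ι → ι`, and `z ↦ z (ρ j) - z j` at the non-roots, `z j` at the
roots, is a measure-preserving involution of `ι → E`.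

Sufficiency: pairs in distinct clusters contribute a bounded factor near `p`. In a cluster of size
`k`, the product over all pairs is a product of `k` stars, one centred at each member, hence at most
the `k`-th power of the largest of them. A power of a star is a product of one-variable functions
`‖w‖ ^ (-c * k)` in the involuted coordinates, integrable near `0` when `c * k < dim E`.

Necessity: for a cluster of size `m`, the set of `z` near `p` on which the cluster has diameter at
most `r` has measure of order `r ^ (dim E * (m - 1))` and the density is at least of order
`r ^ (-c * m * (m - 1))` there. If `dim E ≤ c * m`, the integrals over these sets stay away from `0`
while their measures tend to `0`. For `E = ℂ` the exponents are twice the log discrepancy `m - 1` of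
the diagonal and `-2c` times the order `m * (m - 1) / 2` of the Vandermonde divisor along it.
-/

open Finset Metric Module
open MeasureTheory.Measure (IsAddHaarMeasure)

section StarDomination

theorem prod_offDiag_eq_prod_lt_sq {ι M : Type*} [LinearOrder ι] [CommMonoid M] (s : Finset ι)
    (g : ι → ι → M) (hg : ∀ i j, g i j = g j i) :
    ∏ a ∈ s.offDiag, g a.1 a.2 = ∏ a ∈ s.offDiag with a.1 < a.2, g a.1 a.2 ^ 2 := by
  have hswap : ∏ a ∈ s.offDiag with ¬ a.1 < a.2, g a.1 a.2 =
      ∏ a ∈ s.offDiag with a.1 < a.2, g a.1 a.2 :=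
    prod_nbij' Prod.swap Prod.swap (by grind) (by grind) (by simp) (by simp)
      fun a _ => hg a.1 a.2
  rw [← prod_filter_mul_prod_filter_not _ fun a => a.1 < a.2, hswap, ← prod_mul_distrib]
  simp only [sq]

theorem exists_fiberwise_argmax {ι α β : Type*} [Finite ι] [LinearOrder β] (p : ι → α)
    (T : ι → β) :
    ∃ ρ : ι → ι, (∀ i, p (ρ i) = p i) ∧ (∀ i j, p i = p j → ρ i = ρ j) ∧ ∀ i, T i ≤ T (ρ i) := by
  have hmax : ∀ w : Set.range p, ∃ k, p k = w ∧ ∀ i, p i = w → T i ≤ T k := fun ⟨w, i, hi⟩ =>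
    (p ⁻¹' {w}).exists_max_image T (Set.toFinite _) ⟨i, hi⟩
  choose root hroot hle using hmax
  refine ⟨fun i => root ⟨p i, i, rfl⟩, fun i => hroot _, fun i j h => ?_, fun i => hle _ i rfl⟩
  simp only [h]

theorem exists_prod_fiber_pairs_le_prod_star {ι α M : Type*} [Fintype ι] [CommMonoid M]
    [LinearOrder M] [IsOrderedMonoid M] (p : ι → α) (g : ι → ι → M) :
    ∃ ρ : ι → ι, (∀ i, ρ (ρ i) = ρ i) ∧
      ∏ a ∈ univ.offDiag with p a.1 = p a.2, g a.1 a.2 ≤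
        ∏ j with ρ j ≠ j, g (ρ j) j ^ #{i | p i = p j} := by
  let star (k : ι) : M := ∏ j, if p k = p j ∧ k ≠ j then g k j else 1
  obtain ⟨ρ, hp, hρ, hmax⟩ := exists_fiberwise_argmax p star
  refine ⟨ρ, fun i => hρ _ _ (hp i), ?_⟩
  calc ∏ a ∈ univ.offDiag with p a.1 = p a.2, g a.1 a.2
      = ∏ i, star i := by
        rw [← Fintype.prod_prod_type', ← prod_filter]
        exact prod_congr (by ext; simp [and_comm]) fun _ _ => rfl
    _ ≤ ∏ i, star (ρ i) := prod_le_prod' fun i _ => hmax i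
    _ = ∏ i, ∏ j, if p i = p j ∧ ρ j ≠ j then g (ρ j) j else 1 := by
        refine prod_congr rfl fun i _ => prod_congr rfl fun j _ => ?_
        by_cases h : p i = p j
        · rw [hp i, hρ i j h]
        · simp [hp i, h]
    _ = ∏ j, ∏ i, if p i = p j ∧ ρ j ≠ j then g (ρ j) j else 1 := prod_comm
    _ = ∏ j with ρ j ≠ j, g (ρ j) j ^ #{i | p i = p j} := by
        rw [prod_filter]
        refine prod_congr rfl fun j _ => ?_
        by_cases h : ρ j = j <;> simp [h, prod_ite]

end StarDomination

section ShrinkingSets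

theorem lintegral_eq_top_of_measure_eq_mul_pow {X : Type*} [MeasurableSpace X] {ν : Measure X}
    {f : X → ℝ≥0∞} {B : ℝ → Set X} {A κ : ℝ≥0∞} {D : ℕ} {e : ℝ} (hA₀ : A ≠ 0) (hA : A ≠ ∞)
    (hκ : κ ≠ 0) (hD : D ≠ 0) (hDe : D ≤ e) (hB : ∀ r, MeasurableSet (B r))
    (hν : ∀ᶠ r in 𝓝[>] 0, ν (B r) = A * ENNReal.ofReal r ^ D)
    (hf : ∀ᶠ r in 𝓝[>] 0, ∀ x ∈ B r, κ * ENNReal.ofReal r ^ (-e) ≤ f x) :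
    ∫⁻ x, f x ∂ν = ∞ := by
  by_contra hfin
  have hν₀ : Filter.Tendsto (ν ∘ B) (𝓝[>] 0) (𝓝 0) := by
    have hcont : Continuous fun r : ℝ => A * ENNReal.ofReal r ^ D :=
      (ENNReal.continuous_const_mul hA).comp
        ((ENNReal.continuous_pow D).comp ENNReal.continuous_ofReal)
    have hlim := (hcont.tendsto 0).mono_left (nhdsWithin_le_nhds (s := Set.Ioi 0))
    simp only [ENNReal.ofReal_zero, zero_pow hD, mul_zero] at hlim
    exact hlim.congr' (hν.mono fun r hr => hr.symm)
  have hbound : ∀ᶠ r in 𝓝[>] 0, κ * A ≤ ∫⁻ x in B r, f x ∂ν := by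
    filter_upwards [hν, hf, Ioo_mem_nhdsGT one_pos] with r hνr hfr ⟨hr₀, hr₁⟩
    have hpow : 1 ≤ ENNReal.ofReal r ^ (-e) * ENNReal.ofReal r ^ D := by
      rw [← ENNReal.rpow_natCast, ← ENNReal.rpow_add _ _ (by simpa using hr₀) ENNReal.ofReal_ne_top]
      simpa only [ENNReal.rpow_zero] using ENNReal.rpow_le_rpow_of_exponent_ge
        (ENNReal.ofReal_le_one.2 hr₁.le) (show -e + D ≤ 0 by linarith)
    calc κ * A ≤ κ * A * (ENNReal.ofReal r ^ (-e) * ENNReal.ofReal r ^ D) :=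
          le_mul_of_one_le_right' hpow
      _ = κ * ENNReal.ofReal r ^ (-e) * ν (B r) := by rw [hνr]; ring
      _ ≤ ∫⁻ x in B r, f x ∂ν := by
          rw [← setLIntegral_const]
          exact setLIntegral_mono' (hB r) hfr
  have hlim : κ * A ≤ 0 := ge_of_tendsto (tendsto_setLIntegral_zero hfin hν₀) hbound
  exact mul_ne_zero hκ hA₀ (le_zero_iff.1 hlim)

end ShrinkingSets

section StarCoordinates

variable {ι E : Type*} [NormedAddCommGroup E] [NormedSpace ℝ E]

/-- Star coordinates for a map `ρ` sending each index to the root of its star: a root keeps its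
coordinate, and every other index gets its difference to its root. The sign `z (ρ j) - z j` is the
one that makes this an involution when `ρ` is idempotent. -/
noncomputable def starCoords (ρ : ι → ι) : (ι → E) →ₗ[ℝ] (ι → E) :=
  let coord (j : ι) : (ι → E) →ₗ[ℝ] E := LinearMap.proj j
  LinearMap.pi fun j => if ρ j = j then coord j else coord (ρ j) - coord j

theorem starCoords_apply (ρ : ι → ι) (z : ι → E) (j : ι) :
    starCoords ρ z j = if ρ j = j then z j else z (ρ j) - z j := by
  by_cases h : ρ j = j <;> simp [starCoords, h]

theorem starCoords_involutive {ρ : ι → ι} (hρ : ∀ j, ρ (ρ j) = ρ j) :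
    Function.Involutive (starCoords (E := E) ρ) := by
  intro z
  ext j
  by_cases h : ρ j = j <;> simp [starCoords_apply, h, hρ]

theorem norm_starCoords_le [Fintype ι] (ρ : ι → ι) (z : ι → E) : ‖starCoords ρ z‖ ≤ 2 * ‖z‖ := by
  refine (pi_norm_le_iff_of_nonneg (by positivity)).2 fun j => ?_
  have hz := norm_le_pi_norm z
  rw [starCoords_apply]
  split_ifs
  · linarith [hz j, norm_nonneg z]
  · linarith [norm_sub_le (z (ρ j)) (z j), hz j, hz (ρ j)]

variable [FiniteDimensional ℝ E] [MeasurableSpace E] [BorelSpace E]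

theorem measurable_starCoords [Finite ι] (ρ : ι → ι) : Measurable (starCoords (E := E) ρ) :=
  (LinearMap.continuous_of_finiteDimensional _).measurable

variable [Fintype ι] (μ : Measure E) [IsAddHaarMeasure μ]

theorem measurePreserving_starCoords {ρ : ι → ι} (hρ : ∀ j, ρ (ρ j) = ρ j) :
    MeasurePreserving (starCoords ρ) (Measure.pi fun _ : ι => μ) (Measure.pi fun _ => μ) := by
  have hdet_sq : LinearMap.det (starCoords (E := E) ρ) ^ 2 = 1 := by
    rw [sq, ← LinearMap.det_comp, show starCoords ρ ∘ₗ starCoords ρ = .id from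
      LinearMap.ext (starCoords_involutive hρ), LinearMap.det_id]
  refine ⟨measurable_starCoords ρ, ?_⟩
  have hdet_ne : LinearMap.det (starCoords (E := E) ρ) ≠ 0 := by
    intro h
    simp [h] at hdet_sq
  have habs : |LinearMap.det (starCoords (E := E) ρ)| = 1 := by
    rwa [← abs_one, ← sq_eq_sq_iff_abs_eq_abs, one_pow]
  rw [Measure.map_linearMap_addHaar_eq_smul_addHaar _ hdet_ne, abs_inv, habs, inv_one,
    ENNReal.ofReal_one, one_smul]

end StarCoordinates

section VandermondeDensity

variable {ι E : Type*} [NormedAddCommGroup E]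

theorem exists_eventually_prod_edist_rpow_le {p : ι → E} {s : Finset (ι × ι)}
    (hs : ∀ a ∈ s, p a.1 ≠ p a.2) (c : ℝ) :
    ∃ C ≠ ∞, ∀ᶠ z in 𝓝 p, ∏ a ∈ s, edist (z a.1) (z a.2) ^ (-c) ≤ C := by
  have hval : ∀ a ∈ s, edist (p a.1) (p a.2) ^ (-c) ≠ ∞ := fun a ha =>
    ENNReal.rpow_ne_top_of_ne_zero (edist_eq_zero.not.2 (hs a ha)) (edist_ne_top _ _)
  have hlim : Filter.Tendsto (fun z : ι → E => ∏ a ∈ s, edist (z a.1) (z a.2) ^ (-c)) (𝓝 p)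
      (𝓝 (∏ a ∈ s, edist (p a.1) (p a.2) ^ (-c))) :=
    ENNReal.tendsto_finsetProd_of_ne_top s
      (fun a _ => (ENNReal.continuous_rpow_const.comp
        ((continuous_apply a.1).edist (continuous_apply a.2))).tendsto p) hval
  have hfin := ENNReal.prod_ne_top hval
  exact ⟨_, ENNReal.add_ne_top.2 ⟨hfin, ENNReal.one_ne_top⟩,
    hlim.eventually_le_const (ENNReal.lt_add_right hfin one_ne_zero)⟩

variable [Fintype ι]

theorem exists_edist_le_of_mem_ball (p : ι → E) (ε : ℝ) :
    ∃ M ≠ ∞, ∀ z ∈ ball p ε, ∀ i j, edist (z i) (z j) ≤ M := by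
  refine ⟨ENNReal.ofReal (2 * (ε + ‖p‖)), ENNReal.ofReal_ne_top, fun z hz i j => ?_⟩
  rw [edist_dist]
  refine ENNReal.ofReal_le_ofReal ((dist_le_norm_add_norm _ _).trans ?_)
  linarith [norm_le_pi_norm z i, norm_le_pi_norm z j, norm_lt_of_mem_ball hz]

/-- The density `∏_{i < j} ‖z i - z j‖ ^ (-2c)`, written as a product over ordered pairs so that no
order on the index type is needed; it is `∞` for `c > 0` where two coordinates agree. -/
noncomputable def vandermondeDensity (c : ℝ) (z : ι → E) : ℝ≥0∞ :=
  ∏ a ∈ univ.offDiag, edist (z a.1) (z a.2) ^ (-c)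

theorem vandermondeDensity_eq_prod_lt {ι : Type*} [Fintype ι] [LinearOrder ι] (c : ℝ)
    (z : ι → E) :
    vandermondeDensity c z =
      ∏ a : ι × ι with a.1 < a.2, ENNReal.ofReal ‖z a.1 - z a.2‖ ^ (-(2 * c)) := by
  rw [vandermondeDensity, prod_offDiag_eq_prod_lt_sq univ (fun i j => edist (z i) (z j) ^ (-c))
    fun i j => by rw [edist_comm]]
  refine prod_congr (by ext a; simpa using ne_of_lt) fun a _ => ?_
  rw [← ENNReal.rpow_mul_natCast, edist_eq_enorm_sub, ofReal_norm]
  congr 1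
  push_cast
  ring

theorem vandermondeDensity_eq_mul {α : Type*} (f : ι → α) (c : ℝ) (z : ι → E) :
    vandermondeDensity c z =
      (∏ a ∈ univ.offDiag with f a.1 = f a.2, edist (z a.1) (z a.2) ^ (-c)) *
        ∏ a ∈ univ.offDiag with f a.1 ≠ f a.2, edist (z a.1) (z a.2) ^ (-c) :=
  (prod_filter_mul_prod_filter_not _ _ _).symm

theorem pow_mul_pow_le_vandermondeDensity {α : Type*} (f : ι → α) {c : ℝ} (hc : 0 ≤ c)
    {z : ι → E} {r M : ℝ≥0∞} (hnear : ∀ i j, f i = f j → edist (z i) (z j) ≤ r)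
    (hfar : ∀ i j, edist (z i) (z j) ≤ M) :
    (r ^ (-c)) ^ #{a ∈ univ.offDiag | f a.1 = f a.2} *
        (M ^ (-c)) ^ #{a ∈ univ.offDiag | f a.1 ≠ f a.2} ≤ vandermondeDensity c z := by
  have hanti : ∀ {x y : ℝ≥0∞}, x ≤ y → y ^ (-c) ≤ x ^ (-c) := fun h => by
    simpa only [ENNReal.rpow_neg, ENNReal.inv_le_inv] using ENNReal.rpow_le_rpow h hc
  rw [vandermondeDensity_eq_mul f]
  exact mul_le_mul'
    (pow_card_le_prod _ _ _ fun a ha => hanti (hnear a.1 a.2 (mem_filter.1 ha).2))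
    (pow_card_le_prod _ _ _ fun a _ => hanti (hfar a.1 a.2))

end VandermondeDensity

section Integrability

variable {ι E : Type*} [Fintype ι] [NormedAddCommGroup E] [NormedSpace ℝ E]
  [FiniteDimensional ℝ E] [Nontrivial E] [MeasurableSpace E] [BorelSpace E]
  (μ : Measure E) [IsAddHaarMeasure μ]

theorem setLIntegral_ball_prod_enorm_rpow_ne_top {a : ι → ℝ} (ha : ∀ j, a j < finrank ℝ E)
    {r : ℝ} (hr : 0 < r) :
    ∫⁻ w in ball 0 r, ∏ j, ‖w j‖ₑ ^ (-a j) ∂(Measure.pi fun _ : ι => μ) ≠ ∞ := by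
  have hint : ∀ j, IntegrableOn (fun x : E => ‖x‖ ^ (-a j)) (ball 0 r) μ := fun j =>
    integrableOn_ball_of_norm_le_rpow finrank_pos (ha j) (C := 1)
      (.of_forall fun x => by simp [abs_of_nonneg (Real.rpow_nonneg (norm_nonneg x) _)])
      (Measurable.aestronglyMeasurable (by fun_prop))
  have hprod := (Integrable.fintype_prod hint).2
  have hne : ∀ᵐ w ∂(Measure.pi fun _ : ι => μ), ∀ j, w j ≠ 0 :=
    Filter.eventually_all.2 fun j =>
      (Measure.tendsto_eval_ae_ae (μ := fun _ : ι => μ) (i := j)).eventually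
        (show ∀ᵐ x ∂μ, x ≠ 0 by simp [ae_iff])
  rw [← Measure.restrict_pi_pi, ← ball_pi _ hr] at hprod
  refine ne_of_eq_of_ne (lintegral_congr_ae (ae_restrict_of_ae ?_)) hprod.ne
  filter_upwards [hne] with w hw
  rw [Real.enorm_of_nonneg (by positivity),
    ENNReal.ofReal_prod_of_nonneg fun j _ => by positivity]
  refine prod_congr rfl fun j _ => ?_
  rw [← ENNReal.ofReal_rpow_of_pos (norm_pos_iff.2 (hw j)),
    ofReal_norm]

theorem setLIntegral_ball_prod_star_ne_top {ρ : ι → ι} (hρ : ∀ j, ρ (ρ j) = ρ j) {a : ι → ℝ}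
    (ha : ∀ j, a j < finrank ℝ E) {r : ℝ} (hr : 0 < r) :
    ∫⁻ z in ball 0 r, ∏ j with ρ j ≠ j, edist (z (ρ j)) (z j) ^ (-a j)
      ∂(Measure.pi fun _ : ι => μ) ≠ ∞ := by
  have hball : ball (0 : ι → E) r ⊆ starCoords ρ ⁻¹' ball 0 (2 * r) := fun z hz => by
    simp only [Set.mem_preimage, mem_ball_zero_iff] at hz ⊢
    linarith [norm_starCoords_le ρ z]
  let b (j : ι) : ℝ := if ρ j = j then 0 else a j
  have hb : ∀ j, b j < finrank ℝ E := fun j => by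
    by_cases h : ρ j = j <;> simp [b, h, ha, finrank_pos]
  have hcoords : ∀ z : ι → E, ∏ j with ρ j ≠ j, edist (z (ρ j)) (z j) ^ (-a j) =
      ∏ j, ‖starCoords ρ z j‖ₑ ^ (-b j) := fun z => by
    rw [prod_filter]
    refine prod_congr rfl fun j _ => ?_
    by_cases h : ρ j = j <;> simp [b, h, starCoords_apply, edist_eq_enorm_sub]
  have hpreimage := (measurePreserving_starCoords μ hρ).setLIntegral_comp_preimage
    (s := ball 0 (2 * r)) (f := fun w => ∏ j, ‖w j‖ₑ ^ (-b j)) measurableSet_ball (by fun_prop)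
  simp only [hcoords]
  exact ne_top_of_le_ne_top (setLIntegral_ball_prod_enorm_rpow_ne_top μ hb (by positivity))
    ((lintegral_mono_set hball).trans_eq hpreimage)

theorem exists_mem_nhds_setLIntegral_vandermondeDensity_ne_top {p : ι → E} {c : ℝ}
    (hc : ∀ j, c * #{i | p i = p j} < finrank ℝ E) :
    ∃ s ∈ 𝓝 p, ∫⁻ z in s, vandermondeDensity c z ∂(Measure.pi fun _ => μ) ≠ ∞ := by
  obtain ⟨C, hC, hfar⟩ := exists_eventually_prod_edist_rpow_le (p := p)
    (s := {a ∈ univ.offDiag | p a.1 ≠ p a.2}) (fun a ha => (mem_filter.1 ha).2) c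
  let star (ρ : ι → ι) (z : ι → E) : ℝ≥0∞ :=
    ∏ j with ρ j ≠ j, edist (z (ρ j)) (z j) ^ (-(c * #{i | p i = p j}))
  let stars : Finset (ι → ι) := {ρ | ∀ i, ρ (ρ i) = ρ i}
  have hmeas : ∀ ρ, Measurable (star ρ) := fun ρ => by fun_prop
  have hle : ∀ z, ∏ a ∈ univ.offDiag with p a.1 = p a.2, edist (z a.1) (z a.2) ^ (-c) ≤
      ∑ ρ ∈ stars, star ρ z := fun z => by
    obtain ⟨ρ, hρ, h⟩ :=
      exists_prod_fiber_pairs_le_prod_star p fun i j => edist (z i) (z j) ^ (-c)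
    simp only [← ENNReal.rpow_mul_natCast, neg_mul] at h
    exact h.trans <|
      single_le_sum (f := (star · z)) (fun _ _ => zero_le) (by simpa [stars] using hρ)
  have hball : ball (0 : ι → E) (‖p‖ + 1) ∈ 𝓝 p := isOpen_ball.mem_nhds (by simp)
  refine ⟨_, Filter.inter_mem hball hfar, ne_top_of_le_ne_top
    (b := (∑ ρ ∈ stars, ∫⁻ z in ball 0 (‖p‖ + 1), star ρ z ∂(Measure.pi fun _ => μ)) * C) ?_ ?_⟩
  · refine ENNReal.mul_ne_top (ENNReal.sum_ne_top.2 fun ρ hρ => ?_) hC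
    exact setLIntegral_ball_prod_star_ne_top μ (mem_filter.1 hρ).2 hc (by positivity)
  · rw [← lintegral_finsetSum _ fun ρ _ => hmeas ρ, ← lintegral_mul_const _ (by fun_prop)]
    refine (setLIntegral_mono (by fun_prop) fun z hz => ?_).trans
      (lintegral_mono_set Set.inter_subset_left)
    rw [vandermondeDensity_eq_mul p]
    exact mul_le_mul' (hle z) hz.2

end Integrability

section Divergence

variable {ι E : Type*} [NormedAddCommGroup E] [NormedSpace ℝ E]

/-- The neighborhood of the flat `{z | ∀ j, z j = z (ρ j)}` near `p` on which roots are within `δ`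
of their coordinate in `p` and each star has diameter at most `r`. It is a box in star coordinates,
which makes its measure explicit. -/
def starNhd (ρ : ι → ι) (p : ι → E) (δ r : ℝ) : Set (ι → E) :=
  starCoords ρ ⁻¹' Set.univ.pi fun j => if ρ j = j then ball (p j) δ else ball 0 (r * 2⁻¹)

theorem dist_lt_of_mem_starNhd {ρ : ι → ι} {p z : ι → E} {δ r : ℝ} (hz : z ∈ starNhd ρ p δ r)
    {j : ι} (hj : ρ j = j) : dist (z j) (p j) < δ := by
  simpa [starCoords_apply, hj] using hz j (Set.mem_univ j)

theorem dist_root_lt_of_mem_starNhd {ρ : ι → ι} {p z : ι → E} {δ r : ℝ} (hr : 0 < r)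
    (hz : z ∈ starNhd ρ p δ r) (j : ι) : dist (z (ρ j)) (z j) < r / 2 := by
  by_cases hj : ρ j = j
  · simpa [hj] using hr
  · simpa [starCoords_apply, hj, dist_eq_norm, div_eq_mul_inv] using hz j (Set.mem_univ j)

theorem dist_le_of_mem_starNhd {ρ : ι → ι} {p z : ι → E} {δ r : ℝ} (hr : 0 < r)
    (hz : z ∈ starNhd ρ p δ r) {i j : ι} (hij : ρ i = ρ j) : dist (z i) (z j) ≤ r := by
  have hi := dist_root_lt_of_mem_starNhd hr hz i
  have hj := dist_root_lt_of_mem_starNhd hr hz j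
  rw [hij] at hi
  linarith [dist_triangle_left (z i) (z j) (z (ρ j))]

theorem starNhd_subset_ball [Fintype ι] {ρ : ι → ι} (hρ : ∀ j, ρ (ρ j) = ρ j) {p : ι → E}
    (hp : ∀ j, p (ρ j) = p j) {δ r : ℝ} (hδ : 0 < δ) (hr : 0 < r) :
    starNhd ρ p δ r ⊆ ball p (δ + r / 2) := fun z hz => by
  refine (dist_pi_lt_iff (by positivity)).2 fun j => ?_
  have hroot := dist_lt_of_mem_starNhd hz (hρ j)
  rw [hp] at hroot
  linarith [dist_root_lt_of_mem_starNhd hr hz j, dist_triangle_left (z j) (p j) (z (ρ j))]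

variable [FiniteDimensional ℝ E] [MeasurableSpace E] [BorelSpace E]

theorem measurableSet_starNhd [Finite ι] (ρ : ι → ι) (p : ι → E) (δ r : ℝ) :
    MeasurableSet (starNhd ρ p δ r) :=
  measurable_starCoords ρ <| .univ_pi fun j => by split_ifs <;> exact measurableSet_ball

variable [Fintype ι] (μ : Measure E) [IsAddHaarMeasure μ]

theorem measure_starNhd {ρ : ι → ι} (hρ : ∀ j, ρ (ρ j) = ρ j) (p : ι → E) (δ : ℝ) {r : ℝ}
    (hr : 0 < r) :
    Measure.pi (fun _ => μ) (starNhd ρ p δ r) =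
      (∏ j with ρ j = j, μ (ball (p j) δ)) * μ (ball 0 2⁻¹) ^ #{j | ρ j ≠ j} *
        ENNReal.ofReal r ^ (finrank ℝ E * #{j | ρ j ≠ j}) := by
  have hbox : MeasurableSet
      (Set.univ.pi fun j => if ρ j = j then ball (p j) δ else ball 0 (r * 2⁻¹)) :=
    .univ_pi fun j => by split_ifs <;> exact measurableSet_ball
  rw [starNhd, (measurePreserving_starCoords μ hρ).measure_preimage hbox.nullMeasurableSet,
    Measure.pi_pi]
  simp only [apply_ite μ, prod_ite, prod_const, Measure.addHaar_ball_mul_of_pos μ _ hr,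
    ENNReal.ofReal_pow hr.le, mul_pow, pow_mul]
  ring

/-- The valuative criterion on the flat `{z | ∀ j, z j = z (ρ j)}`: its codimension is
`finrank ℝ E * #{j | ρ j ≠ j}`, and the density blows up along it to order `c` for each
ordered pair `a` with `ρ a.1 = ρ a.2`. -/
theorem setLIntegral_vandermondeDensity_eq_top_of_codim_le {ρ : ι → ι} (hρ : ∀ j, ρ (ρ j) = ρ j)
    (hnonroot : ∃ j, ρ j ≠ j) [Nontrivial E] {p : ι → E} (hp : ∀ j, p (ρ j) = p j) {c : ℝ}
    (hc : finrank ℝ E * #{j | ρ j ≠ j} ≤ c * #{a ∈ univ.offDiag | ρ a.1 = ρ a.2})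
    {s : Set (ι → E)} (hs : s ∈ 𝓝 p) :
    ∫⁻ z in s, vandermondeDensity c z ∂(Measure.pi fun _ => μ) = ∞ := by
  obtain ⟨ε, hε, hεs⟩ := Metric.mem_nhds_iff.1 hs
  have hsub : ∀ᶠ r in 𝓝[>] 0, starNhd ρ p (ε / 2) r ⊆ ball p ε := by
    filter_upwards [Ioo_mem_nhdsGT hε] with r ⟨hr, hrε⟩
    exact (starNhd_subset_ball hρ hp (half_pos hε) hr).trans (ball_subset_ball (by linarith))
  have hcodim : finrank ℝ E * #{j | ρ j ≠ j} ≠ 0 := by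
    obtain ⟨j, hj⟩ := hnonroot
    exact mul_ne_zero finrank_pos.ne' (card_ne_zero_of_mem (mem_filter.2 ⟨mem_univ j, hj⟩))
  have hc₀ : 0 ≤ c := by
    by_contra! hneg
    have : (0 : ℝ) < finrank ℝ E * #{j | ρ j ≠ j} := mod_cast Nat.pos_of_ne_zero hcodim
    nlinarith [(#{a ∈ univ.offDiag | ρ a.1 = ρ a.2}).cast_nonneg (α := ℝ)]
  obtain ⟨M, hM, hfar⟩ := exists_edist_le_of_mem_ball p ε
  refine lintegral_eq_top_of_measure_eq_mul_pow (B := starNhd ρ p (ε / 2))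
    (A := (∏ j with ρ j = j, μ (ball (p j) (ε / 2))) * μ (ball 0 2⁻¹) ^ #{j | ρ j ≠ j})
    (κ := (M ^ (-c)) ^ #{a ∈ univ.offDiag | ρ a.1 ≠ ρ a.2}) ?_ ?_ ?_ hcodim (mod_cast hc)
    (measurableSet_starNhd ρ p _) ?_ ?_
  · exact mul_ne_zero (prod_ne_zero_iff.2 fun j _ => (measure_ball_pos μ _ (half_pos hε)).ne')
      (pow_ne_zero _ (measure_ball_pos μ _ (by norm_num)).ne')
  · exact ENNReal.mul_ne_top (ENNReal.prod_ne_top fun j _ => measure_ball_ne_top)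
      (ENNReal.pow_ne_top measure_ball_ne_top)
  · exact pow_ne_zero _ (by simpa [ENNReal.rpow_neg] using ENNReal.rpow_ne_top_of_nonneg hc₀ hM)
  · filter_upwards [hsub, self_mem_nhdsWithin] with r hr hr₀
    rw [Measure.restrict_eq_self _ (hr.trans hεs), measure_starNhd μ hρ p _ hr₀]
  · filter_upwards [hsub, self_mem_nhdsWithin] with r hr hr₀ z hz
    have hnear : ∀ i j, ρ i = ρ j → edist (z i) (z j) ≤ ENNReal.ofReal r := fun i j hij => by
      rw [edist_dist]
      exact ENNReal.ofReal_le_ofReal (dist_le_of_mem_starNhd hr₀ hz hij)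
    rw [← neg_mul, ENNReal.rpow_mul_natCast, mul_comm]
    exact pow_mul_pow_le_vandermondeDensity ρ hc₀ hnear (hfar z (hr hz))

theorem setLIntegral_vandermondeDensity_eq_top [Nontrivial E] {p : ι → E} {w : E} {c : ℝ}
    (hw : 2 ≤ #{i | p i = w}) (hc : finrank ℝ E ≤ c * #{i | p i = w}) {s : Set (ι → E)}
    (hs : s ∈ 𝓝 p) :
    ∫⁻ z in s, vandermondeDensity c z ∂(Measure.pi fun _ => μ) = ∞ := by
  set I : Finset ι := {i | p i = w}
  obtain ⟨i₀, hi₀⟩ : I.Nonempty := card_pos.1 (by lia)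
  let ρ (j : ι) : ι := if j ∈ I then i₀ else j
  have hnonroots : univ.filter (fun j => ρ j ≠ j) = I.erase i₀ := by grind
  have hpairs : univ.offDiag.filter (fun a => ρ a.1 = ρ a.2) = I.offDiag := by grind
  refine setLIntegral_vandermondeDensity_eq_top_of_codim_le μ (ρ := ρ) ?_ ?_ ?_ ?_ hs
  · grind
  · obtain ⟨j, hj⟩ : (I.erase i₀).Nonempty := card_pos.1 (by grind)
    exact ⟨j, by grind⟩
  · grind
  · rw [hnonroots, hpairs, card_erase_of_mem hi₀, offDiag_card, ← Nat.mul_sub_one]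
    push_cast
    rw [← mul_assoc]
    gcongr

end Divergence

theorem vandermonde_local_integrability_threshold_general {ι E : Type*} [Fintype ι]
    [LinearOrder ι] [NormedAddCommGroup E] [NormedSpace ℝ E] [FiniteDimensional ℝ E]
    [Nontrivial E] [MeasurableSpace E] [BorelSpace E] (μ : Measure E) [IsAddHaarMeasure μ]
    (p : ι → E) {m : ℕ} (hm2 : 2 ≤ m)
    (hm : IsGreatest {n : ℕ | ∃ w : E, n = #{i | p i = w}} m) (c : ℝ) :
    (∃ s ∈ 𝓝 p,
        ∫⁻ z in s, ∏ a : ι × ι with a.1 < a.2, ENNReal.ofReal ‖z a.1 - z a.2‖ ^ (-(2 * c))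
          ∂(Measure.pi fun _ => μ) ≠ ∞) ↔
      c < finrank ℝ E / m := by
  simp only [← vandermondeDensity_eq_prod_lt]
  rw [lt_div_iff₀ (by positivity)]
  obtain ⟨⟨w, rfl⟩, hmax⟩ := hm
  constructor
  · rintro ⟨s, hs, hfin⟩
    by_contra! hle
    exact hfin (setLIntegral_vandermondeDensity_eq_top μ hm2 hle hs)
  · intro hlt
    refine exists_mem_nhds_setLIntegral_vandermondeDensity_ne_top μ fun j => ?_
    have hj : (#{i | p i = p j} : ℝ) ≤ #{i | p i = w} := mod_cast hmax ⟨p j, rfl⟩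
    rcases le_total c 0 with hc | hc
    · exact (mul_nonpos_of_nonpos_of_nonneg hc (by positivity)).trans_lt (mod_cast finrank_pos)
    · exact (mul_le_mul_of_nonneg_left hj hc).trans_lt hlt

/-- **Local integrability threshold of the Vandermonde density.** Let `N ≥ 2`, `p ∈ ℂ^N`,
and let `m ≥ 2` be the maximal multiplicity among the coordinates of `p`. For `c > 0`, the
function `z ↦ ∏_{i<j} |z_i - z_j| ^ (-2c)` is Lebesgue integrable on some neighborhood of `p`
if and only if `c < 2/m`. -/
theorem vandermonde_local_integrability_threshold (N : ℕ) (hN : 2 ≤ N) (p : Fin N → ℂ)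
    (m : ℕ) (hm2 : 2 ≤ m)
    (hm : IsGreatest {n : ℕ | ∃ w : ℂ, n = (Finset.univ.filter fun i => p i = w).card} m)
    (c : ℝ) (hc : 0 < c) :
    (∃ s ∈ 𝓝 p,
        (∫⁻ z in s,
          ∏ a ∈ Finset.univ.filter (fun a : Fin N × Fin N => a.1 < a.2),
            (ENNReal.ofReal ‖z a.1 - z a.2‖) ^ (-(2 * c)) ∂volume) ≠ ∞) ↔
      c < 2 / (m : ℝ) := by
  simpa only [Complex.finrank_real_complex, Nat.cast_ofNat, ← volume_pi] using
    vandermonde_local_integrability_threshold_general volume p hm2 hm c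
end

section
/- Let m ≥ 1, let w₁,…,w_m ∈ (0,1) with V := 2 − Σ_{l=1}^m w_l > 0, let q₁,…,q_m ∈ ℂ be distinct points, let N ≥ 2 be an integer, set k := (N−1)/V, and let γ > 0. Then the function z ↦ ∏_{1≤i<j≤N} |z_i − z_j|^{−2γ/k} · ∏_{i=1}^N ∏_{l=1}^m |z_i − q_l|^{−2w_l} is locally integrable on ℂ^N if and only if γ < min{ 2(1 − 1/N)/V , min_{1≤l≤m} 2(1 − w_l)/V }. -/
open MeasureTheory Topology
open scoped ENNReal Classical

/-!
Write `c` for the exponent of the pair interaction, `u_l` for the orders of the poles and `d` for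
the real dimension of the one-particle space (here `2`).

Integrability: the complete graph on the particles is covered twice by its `N` stars, so the
integrand is a product of `N` star factors to a power `b` and a one-particle factor to the power
`1 - N b`. Hölder's inequality reduces the claim to a single star, where Tonelli integrates the
leaves one by one provided the exponent on each edge is below `d`. Taking `b` slightly above
`c / (2 d)` makes this so, and the room left for the poles is exactly what the threshold allows.

Divergence: when all particles meet, `|z_i - z_j|` is at most twice the distance to the collision
point, so the integrand is bounded below by a power of that distance. If they meet at `q_l`, the
dimension is `N d` and the power `-(c N (N - 1) / 2 + N u_l)`. Away from the poles, one fixes one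
particle and lets the other `N - 1` collide with it, which leaves dimension `(N - 1) d` and the
power `-c N (N - 1) / 2`.
-/

section Powers

lemma ennreal_rpow_le_rpow_of_nonpos {x y : ℝ≥0∞} {z : ℝ} (h : x ≤ y) (hz : z ≤ 0) :
    y ^ z ≤ x ^ z := by
  rw [← neg_neg z, ENNReal.rpow_neg y, ENNReal.rpow_neg x, ENNReal.inv_le_inv]
  exact ENNReal.rpow_le_rpow h (neg_nonneg.2 hz)

lemma ennreal_rpow_add_of_nonpos (x : ℝ≥0∞) {y z : ℝ} (hy : y ≤ 0) (hz : z ≤ 0) :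
    x ^ (y + z) = x ^ y * x ^ z := by
  simpa [ENNReal.inv_rpow, ← ENNReal.rpow_neg, add_comm] using
    ENNReal.rpow_add_of_nonneg (x := x⁻¹) _ _ (neg_nonneg.2 hy) (neg_nonneg.2 hz)

end Powers

section ProductMeasures

lemma lintegral_pi_eq_lintegral_insertNth {n : ℕ} {X : Fin (n + 1) → Type*}
    [∀ i, MeasurableSpace (X i)] (μ : ∀ i, Measure (X i)) [∀ i, SigmaFinite (μ i)]
    (i : Fin (n + 1)) {F : (∀ j, X j) → ℝ≥0∞} (hF : Measurable F) :
    ∫⁻ z, F z ∂Measure.pi μ =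
      ∫⁻ x, ∫⁻ y, F (i.insertNth x y) ∂Measure.pi (fun j => μ (i.succAbove j)) ∂μ i := by
  rw [← (measurePreserving_piFinSuccAbove μ i).symm.lintegral_comp hF, lintegral_prod]
  · rfl
  · exact (hF.comp (MeasurableEquiv.measurable _)).aemeasurable

lemma lintegral_pi_prod_eq_prod_lintegral {n : ℕ} {X : Fin n → Type*}
    [∀ i, MeasurableSpace (X i)] (μ : ∀ i, Measure (X i)) [∀ i, SigmaFinite (μ i)]
    {f : ∀ i, X i → ℝ≥0∞} (hf : ∀ i, Measurable (f i)) :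
    ∫⁻ z, ∏ i, f i (z i) ∂Measure.pi μ = ∏ i, ∫⁻ x, f i x ∂μ i := by
  induction n with
  | zero => simp
  | succ n ih =>
    rw [lintegral_pi_eq_lintegral_insertNth μ 0 (by fun_prop), Fin.prod_univ_succ]
    have tail (x : X 0) :
        ∫⁻ y, ∏ i, f i ((0 : Fin (n + 1)).insertNth x y i)
            ∂Measure.pi (fun j => μ (Fin.succAbove 0 j)) =
          f 0 x * ∏ i : Fin n, ∫⁻ x, f i.succ x ∂μ i.succ := by
      rw [← ih (fun i => μ i.succ) fun i => hf i.succ, ← lintegral_const_mul _ (by fun_prop)]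
      simp only [Fin.prod_univ_succ]
      rfl
    simp only [tail]
    exact lintegral_mul_const _ (hf 0)

end ProductMeasures

section Singularities

lemma setLIntegral_eq_top_of_eventually_mul_le {X : Type*} [TopologicalSpace X]
    [MeasurableSpace X] [OpensMeasurableSpace X] {μ : Measure X} {p : X} {f g : X → ℝ≥0∞}
    {C : ℝ≥0∞} (hC : C ≠ 0) (hg : ∀ s ∈ 𝓝 p, ∫⁻ z in s, g z ∂μ = ∞)
    (hgf : ∀ᶠ z in 𝓝 p, C * g z ≤ f z) {s : Set X} (hs : s ∈ 𝓝 p) :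
    ∫⁻ z in s, f z ∂μ = ∞ := by
  obtain ⟨t, ht, ht_open, hpt⟩ := mem_nhds_iff.1 (Filter.inter_mem hs hgf)
  have hts : t ⊆ s := fun z hz => (ht hz).1
  have hle : ∀ z ∈ t, C * g z ≤ f z := fun z hz => (ht hz).2
  refine top_le_iff.1 ?_
  calc ∞ = C * ∫⁻ z in t, g z ∂μ := by rw [hg t (ht_open.mem_nhds hpt), ENNReal.mul_top hC]
    _ ≤ ∫⁻ z in t, C * g z ∂μ := lintegral_const_mul_le _ _
    _ ≤ ∫⁻ z in t, f z ∂μ := setLIntegral_mono' ht_open.measurableSet hle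
    _ ≤ ∫⁻ z in s, f z ∂μ := lintegral_mono_set hts

lemma setLIntegral_lt_top_of_isCompact {X : Type*} [TopologicalSpace X] [MeasurableSpace X]
    {μ : Measure X} {f : X → ℝ≥0∞} (hf : ∀ p, ∃ s ∈ 𝓝 p, ∫⁻ z in s, f z ∂μ < ∞)
    {K : Set X} (hK : IsCompact K) : ∫⁻ z in K, f z ∂μ < ∞ := by
  refine hK.induction_on (p := fun s => ∫⁻ z in s, f z ∂μ < ∞) (by simp)
    (fun s t hst ht => (lintegral_mono_set hst).trans_lt ht)
    (fun s t hs ht => (lintegral_union_le f s t).trans_lt (ENNReal.add_lt_top.2 ⟨hs, ht⟩))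
    fun p _ => ?_
  obtain ⟨s, hs, hfs⟩ := hf p
  exact ⟨s, mem_nhdsWithin_of_mem_nhds hs, hfs⟩

variable {E : Type*} [NormedAddCommGroup E] [MeasurableSpace E] [BorelSpace E] (μ : Measure E)

lemma setLIntegral_ball_comp_sub [μ.IsAddRightInvariant] (f : E → ℝ≥0∞) (x : E) (r : ℝ) :
    ∫⁻ z in Metric.ball x r, f (z - x) ∂μ = ∫⁻ z in Metric.ball 0 r, f z ∂μ := by
  rw [← (measurePreserving_sub_right μ x).setLIntegral_comp_preimage_emb
    (measurableEmbedding_subRight x) f (Metric.ball 0 r)]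
  congr 2
  ext z
  simp [dist_eq_norm]

variable [NormedSpace ℝ E] [FiniteDimensional ℝ E] [Nontrivial E] [μ.IsAddHaarMeasure]

lemma setLIntegral_ball_enorm_rpow_neg_lt_top_iff {r : ℝ} (hr : 0 < r) (D : ℝ) :
    ∫⁻ z in Metric.ball (0 : E) r, ‖z‖ₑ ^ (-D) ∂μ < ∞ ↔ D < Module.finrank ℝ E := by
  have enorm_rpow : ∀ᵐ z ∂μ.restrict (Metric.ball 0 r), ‖z‖ₑ ^ (-D) = ‖(‖z‖ ^ (-D) : ℝ)‖ₑ := by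
    have ne_zero : ∀ᵐ z ∂μ, z ≠ 0 := by simp [ae_iff]
    filter_upwards [ae_restrict_of_ae ne_zero] with z hz
    rw [← ofReal_norm, ENNReal.ofReal_rpow_of_pos (norm_pos_iff.2 hz),
      Real.enorm_of_nonneg (by positivity)]
  have polar : Set.EqOn (fun y : ℝ => y ^ (Module.finrank ℝ E - 1) • y ^ (-D))
      (fun y => y ^ ((Module.finrank ℝ E : ℝ) - 1 - D)) (Set.Ioo 0 r) := fun y hy => by
    simp only [smul_eq_mul]
    rw [← Real.rpow_natCast, ← Real.rpow_add hy.1, Nat.cast_sub Module.finrank_pos,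
      Nat.cast_one, ← sub_eq_add_neg]
  have aesm : AEStronglyMeasurable (fun z : E => (‖z‖ ^ (-D) : ℝ))
      (μ.restrict (Metric.ball 0 r)) := (measurable_norm.pow_const _).aestronglyMeasurable
  calc ∫⁻ z in Metric.ball (0 : E) r, ‖z‖ₑ ^ (-D) ∂μ < ∞
      ↔ IntegrableOn (fun z : E => (‖z‖ ^ (-D) : ℝ)) (Metric.ball 0 r) μ := by
        rw [lintegral_congr_ae enorm_rpow]
        exact (and_iff_right aesm).symm
    _ ↔ IntegrableOn (fun y : ℝ => y ^ ((Module.finrank ℝ E : ℝ) - 1 - D)) (Set.Ioo 0 r) := by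
        rw [integrableOn_fun_norm_addHaar μ (f := fun y : ℝ => y ^ (-D)),
          integrableOn_congr_fun polar measurableSet_Ioo]
    _ ↔ D < Module.finrank ℝ E := by
        rw [intervalIntegral.integrableOn_Ioo_rpow_iff hr]
        constructor <;> intro h <;> linarith

lemma setLIntegral_enorm_sub_rpow_neg_eq_top {D : ℝ} (hD : Module.finrank ℝ E ≤ D) {p : E}
    {s : Set E} (hs : s ∈ 𝓝 p) : ∫⁻ z in s, ‖z - p‖ₑ ^ (-D) ∂μ = ∞ := by
  obtain ⟨r, hr, hrs⟩ := Metric.mem_nhds_iff.1 hs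
  have ball_eq_top : ∫⁻ z in Metric.ball p r, ‖z - p‖ₑ ^ (-D) ∂μ = ∞ := by
    rw [setLIntegral_ball_comp_sub μ (‖·‖ₑ ^ (-D)), ← not_lt_top_iff,
      setLIntegral_ball_enorm_rpow_neg_lt_top_iff μ hr]
    exact hD.not_gt
  exact top_le_iff.1 (ball_eq_top.ge.trans (lintegral_mono_set hrs))

lemma exists_forall_setLIntegral_enorm_sub_rpow_neg_le {D : ℝ} (hD : D < Module.finrank ℝ E)
    {s : Set E} (hs : Bornology.IsBounded s) :
    ∃ C < ∞, ∀ x ∈ s, ∫⁻ z in s, ‖z - x‖ₑ ^ (-D) ∂μ ≤ C := by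
  refine ⟨∫⁻ z in Metric.ball 0 (Metric.diam s + 1), ‖z‖ₑ ^ (-D) ∂μ,
    (setLIntegral_ball_enorm_rpow_neg_lt_top_iff μ (by positivity) D).2 hD, fun x hx => ?_⟩
  rw [← setLIntegral_ball_comp_sub μ (‖·‖ₑ ^ (-D)) x]
  refine lintegral_mono_set fun z hz => ?_
  rw [Metric.mem_ball]
  linarith [Metric.dist_le_diam_of_mem hs hz hx]

end Singularities

section PoleWeight

variable {E κ : Type*} [NormedAddCommGroup E]

lemma exists_eventually_prod_enorm_sub_rpow_mem_Icc {q : κ → E} (u : κ → ℝ) {p : E}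
    {t : Finset κ} (ht : ∀ l ∈ t, q l ≠ p) :
    ∃ C C' : ℝ≥0∞, C ≠ 0 ∧ C' ≠ ∞ ∧
      ∀ᶠ x in 𝓝 p, ∏ l ∈ t, ‖x - q l‖ₑ ^ (-u l) ∈ Set.Icc C C' := by
  have ne_zero : ∀ l ∈ t, ‖p - q l‖ₑ ≠ 0 := fun l hl =>
    enorm_ne_zero.2 (sub_ne_zero.2 (ht l hl).symm)
  have factor_ne_zero : ∀ l ∈ t, ‖p - q l‖ₑ ^ (-u l) ≠ 0 := fun l hl =>
    (ENNReal.rpow_pos (pos_iff_ne_zero.2 (ne_zero l hl)) enorm_ne_top).ne'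
  have factor_ne_top : ∀ l ∈ t, ‖p - q l‖ₑ ^ (-u l) ≠ ∞ := fun l hl =>
    ENNReal.rpow_ne_top_of_ne_zero (ne_zero l hl) enorm_ne_top
  have tendsto : Filter.Tendsto (fun x => ∏ l ∈ t, ‖x - q l‖ₑ ^ (-u l)) (𝓝 p)
      (𝓝 (∏ l ∈ t, ‖p - q l‖ₑ ^ (-u l))) := by
    refine ENNReal.tendsto_finsetProd_of_ne_top t (fun l _ => ?_) factor_ne_top
    exact (ENNReal.continuous_rpow_const.comp
      (continuous_enorm.comp (continuous_id.sub continuous_const))).tendsto p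
  obtain ⟨C, hC, hC_lt⟩ := exists_between
    (pos_iff_ne_zero.2 (Finset.prod_ne_zero_iff.2 factor_ne_zero))
  obtain ⟨C', hlt_C', hC'⟩ := exists_between (ENNReal.prod_ne_top factor_ne_top).lt_top
  exact ⟨C, C', hC.ne', hC'.ne, tendsto.eventually (Icc_mem_nhds hC_lt hlt_C')⟩

variable [Fintype κ]

/-- The one-particle density `∏_l |x - q_l|^(-u_l)` with poles `q_l` of order `u_l`; negative
orders, that is zeros, are allowed. -/
noncomputable def poleWeight (q : κ → E) (u : κ → ℝ) (x : E) : ℝ≥0∞ :=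
  ∏ l, ‖x - q l‖ₑ ^ (-u l)

@[fun_prop]
lemma measurable_poleWeight [MeasurableSpace E] [BorelSpace E] (q : κ → E) (u : κ → ℝ) :
    Measurable (poleWeight q u) := by
  unfold poleWeight
  fun_prop

lemma poleWeight_rpow (q : κ → E) (u : κ → ℝ) {B : ℝ} (hB : 0 ≤ B) (x : E) :
    poleWeight q u x ^ B = poleWeight q (fun l => u l * B) x := by
  simp only [poleWeight, ← ENNReal.prod_rpow_of_nonneg hB, ← ENNReal.rpow_mul, neg_mul]

lemma exists_eventually_poleWeight_mem_Icc {q : κ → E} (u : κ → ℝ) {p : E}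
    (hp : p ∉ Set.range q) :
    ∃ C C' : ℝ≥0∞, C ≠ 0 ∧ C' ≠ ∞ ∧ ∀ᶠ x in 𝓝 p, poleWeight q u x ∈ Set.Icc C C' :=
  exists_eventually_prod_enorm_sub_rpow_mem_Icc u fun l _ h => hp ⟨l, h⟩

lemma exists_eventually_poleWeight_mem_Icc_mul {q : κ → E} (hq : Function.Injective q)
    (u : κ → ℝ) (l : κ) :
    ∃ C C' : ℝ≥0∞, C ≠ 0 ∧ C' ≠ ∞ ∧ ∀ᶠ x in 𝓝 (q l),
      poleWeight q u x ∈ Set.Icc (C * ‖x - q l‖ₑ ^ (-u l)) (C' * ‖x - q l‖ₑ ^ (-u l)) := by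
  obtain ⟨C, C', hC, hC', h⟩ := exists_eventually_prod_enorm_sub_rpow_mem_Icc u
    (t := Finset.univ.erase l) fun l' hl' => hq.ne (Finset.ne_of_mem_erase hl')
  refine ⟨C, C', hC, hC', h.mono fun x hx => ?_⟩
  rw [poleWeight, ← Finset.prod_erase_mul _ _ (Finset.mem_univ l)]
  exact ⟨mul_le_mul_left hx.1 _, mul_le_mul_left hx.2 _⟩

variable [MeasurableSpace E] [BorelSpace E] [NormedSpace ℝ E] [FiniteDimensional ℝ E]
  [Nontrivial E] (μ : Measure E) [μ.IsAddHaarMeasure]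

lemma exists_mem_nhds_setLIntegral_lt_top {D : ℝ} (hD : D < Module.finrank ℝ E) {p : E}
    {f : E → ℝ≥0∞} {C : ℝ≥0∞} (hC : C ≠ ∞) (hf : ∀ᶠ x in 𝓝 p, f x ≤ C * ‖x - p‖ₑ ^ (-D)) :
    ∃ s ∈ 𝓝 p, ∫⁻ x in s, f x ∂μ < ∞ := by
  obtain ⟨r, hr, hfr⟩ := Metric.eventually_nhds_iff_ball.1 hf
  refine ⟨Metric.ball p r, Metric.ball_mem_nhds p hr, ?_⟩
  calc ∫⁻ x in Metric.ball p r, f x ∂μ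
      ≤ ∫⁻ x in Metric.ball p r, C * ‖x - p‖ₑ ^ (-D) ∂μ :=
        setLIntegral_mono' measurableSet_ball hfr
    _ = C * ∫⁻ x in Metric.ball 0 r, ‖x‖ₑ ^ (-D) ∂μ := by
        rw [lintegral_const_mul' _ _ hC, setLIntegral_ball_comp_sub μ (‖·‖ₑ ^ (-D))]
    _ < ∞ := ENNReal.mul_lt_top hC.lt_top
        ((setLIntegral_ball_enorm_rpow_neg_lt_top_iff μ hr D).2 hD)

lemma setLIntegral_poleWeight_lt_top {q : κ → E} (hq : Function.Injective q) {u : κ → ℝ}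
    (hu : ∀ l, u l < Module.finrank ℝ E) {K : Set E} (hK : IsCompact K) :
    ∫⁻ x in K, poleWeight q u x ∂μ < ∞ := by
  refine setLIntegral_lt_top_of_isCompact (fun p => ?_) hK
  by_cases hp : p ∈ Set.range q
  · obtain ⟨l, rfl⟩ := hp
    obtain ⟨_, C, _, hC, h⟩ := exists_eventually_poleWeight_mem_Icc_mul hq u l
    exact exists_mem_nhds_setLIntegral_lt_top μ (hu l) hC (h.mono fun x hx => hx.2)
  · obtain ⟨_, C, _, hC, h⟩ := exists_eventually_poleWeight_mem_Icc u hp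
    have finrank_pos : (0 : ℝ) < Module.finrank ℝ E := Nat.cast_pos.2 Module.finrank_pos
    exact exists_mem_nhds_setLIntegral_lt_top μ finrank_pos hC
      (h.mono fun x hx => by simpa using hx.2)

end PoleWeight

section PairWeight

variable {E : Type*} [NormedAddCommGroup E] {N : ℕ}

/-- The power `∏_{i<j} |z_i - z_j|^(-c)` of the Vandermonde determinant, which makes particles
attract each other when `0 < c`. -/
noncomputable def pairWeight (c : ℝ) (z : Fin N → E) : ℝ≥0∞ :=
  ∏ a ∈ Finset.univ.filter (fun a : Fin N × Fin N => a.1 < a.2), ‖z a.1 - z a.2‖ₑ ^ (-c)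

/-- The product `∏_{j≠i} |z_i - z_j|^(-σ)` of the interactions with the `i`-th particle, that is
along the edges of the star graph centred at `i`. -/
noncomputable def starWeight (σ : ℝ) (i : Fin N) (z : Fin N → E) : ℝ≥0∞ :=
  ∏ j ∈ {i}ᶜ, ‖z j - z i‖ₑ ^ (-σ)

/-- The `N` stars together cover every pair twice. -/
lemma prod_starWeight (σ : ℝ) (z : Fin N → E) :
    ∏ i, starWeight σ i z = pairWeight (2 * σ) z := by
  simp only [starWeight]
  rw [← Finset.prod_prod_Ioi_mul_eq_prod_prod_off_diag fun j i => ‖z j - z i‖ₑ ^ (-σ),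
    pairWeight, Finset.prod_filter, Fintype.prod_prod_type]
  refine Finset.prod_congr rfl fun i _ => ?_
  rw [← Finset.prod_filter, Finset.filter_lt_eq_Ioi]
  refine Finset.prod_congr rfl fun j _ => ?_
  rw [enorm_sub_rev (z j), ← sq, ← ENNReal.rpow_natCast, ← ENNReal.rpow_mul]
  congr 1
  push_cast
  ring

lemma starWeight_rpow {b : ℝ} (hb : 0 ≤ b) (σ : ℝ) (i : Fin N) (z : Fin N → E) :
    starWeight σ i z ^ b = starWeight (σ * b) i z := by
  simp only [starWeight, ← ENNReal.prod_rpow_of_nonneg hb, ← ENNReal.rpow_mul, neg_mul]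

lemma pairWeight_mul_prod_rpow_add {b t : ℝ} (hb : 0 ≤ b) (ht : 0 ≤ t) (σ : ℝ)
    (f : E → ℝ≥0∞) (z : Fin N → E) :
    pairWeight (2 * (σ * b)) z * ∏ i, f (z i) ^ (t + b) =
      (∏ i, f (z i)) ^ t * ∏ i, (f (z i) * starWeight σ i z) ^ b := by
  simp only [← prod_starWeight, ← starWeight_rpow hb, ENNReal.mul_rpow_of_nonneg _ _ hb,
    ENNReal.rpow_add_of_nonneg _ _ ht hb, ← ENNReal.prod_rpow_of_nonneg ht,
    Finset.prod_mul_distrib]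
  ring

lemma mul_rpow_le_pairWeight {c : ℝ} (hc : 0 ≤ c) {z : Fin N → E} {a : E} {δ : NNReal}
    (hz : ∀ i, ‖z i - a‖₊ ≤ δ) :
    2 ^ (-(c * N.choose 2)) * (δ : ℝ≥0∞) ^ (-(c * N.choose 2)) ≤ pairWeight c z := by
  have enorm_le (i : Fin N) : ‖z i - a‖ₑ ≤ δ := ENNReal.coe_le_coe.2 (hz i)
  have factor_le (i j : Fin N) : (2 * δ : ℝ≥0∞) ^ (-c) ≤ ‖z i - z j‖ₑ ^ (-c) := by
    refine ennreal_rpow_le_rpow_of_nonpos ?_ (neg_nonpos.2 hc)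
    calc ‖z i - z j‖ₑ = ‖(z i - a) - (z j - a)‖ₑ := by rw [sub_sub_sub_cancel_right]
      _ ≤ ‖z i - a‖ₑ + ‖z j - a‖ₑ := enorm_sub_le
      _ ≤ 2 * δ := by rw [two_mul]; exact add_le_add (enorm_le i) (enorm_le j)
  calc (2 : ℝ≥0∞) ^ (-(c * N.choose 2)) * (δ : ℝ≥0∞) ^ (-(c * N.choose 2))
      = ∏ _a ∈ Finset.univ.filter (fun a : Fin N × Fin N => a.1 < a.2), (2 * δ : ℝ≥0∞) ^ (-c) := by
        rw [Finset.prod_const, Fintype.card_product_filter_lt, Fintype.card_fin,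
          ← ENNReal.rpow_mul_natCast, neg_mul,
          ENNReal.mul_rpow_of_ne_top ENNReal.ofNat_ne_top ENNReal.coe_ne_top]
    _ ≤ pairWeight c z := Finset.prod_le_prod' fun a _ => factor_le a.1 a.2

variable [MeasurableSpace E] [BorelSpace E] [SecondCountableTopology E]

@[fun_prop]
lemma measurable_pairWeight (c : ℝ) : Measurable (pairWeight c : (Fin N → E) → ℝ≥0∞) := by
  unfold pairWeight
  fun_prop

@[fun_prop]
lemma measurable_starWeight (σ : ℝ) (i : Fin N) :
    Measurable (starWeight σ i : (Fin N → E) → ℝ≥0∞) := by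
  unfold starWeight
  fun_prop

lemma lintegral_mul_starWeight {n : ℕ} (ν : Measure E) [SigmaFinite ν] {f : E → ℝ≥0∞}
    (hf : Measurable f) (σ : ℝ) (i : Fin (n + 1)) :
    ∫⁻ z, f (z i) * starWeight σ i z ∂Measure.pi (fun _ => ν) =
      ∫⁻ x, f x * (∫⁻ y, ‖y - x‖ₑ ^ (-σ) ∂ν) ^ n ∂ν := by
  rw [lintegral_pi_eq_lintegral_insertNth _ i (by fun_prop)]
  refine lintegral_congr fun x => ?_
  simp only [starWeight, ← Fin.image_succAbove_univ,
    Finset.prod_image Fin.succAbove_right_injective.injOn, Fin.insertNth_apply_same,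
    Fin.insertNth_apply_succAbove]
  rw [lintegral_const_mul _ (by fun_prop),
    lintegral_pi_prod_eq_prod_lintegral (fun _ => ν) (f := fun _ y => ‖y - x‖ₑ ^ (-σ))
      (by fun_prop), Finset.prod_const, Finset.card_univ, Fintype.card_fin]

end PairWeight

section FullCollision

variable {E κ : Type*} [NormedAddCommGroup E] [Fintype κ] {q : κ → E} {u : κ → ℝ} {N : ℕ}

lemma exists_eventually_mul_rpow_le_pairWeight_mul_prod (hq : Function.Injective q) {c : ℝ}
    (hc : 0 ≤ c) {l : κ} (hu : 0 ≤ u l) :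
    ∃ C ≠ 0, ∀ᶠ z : Fin N → E in 𝓝 fun _ => q l,
      C * ‖z - fun _ => q l‖ₑ ^ (-(c * N.choose 2 + u l * N)) ≤
        pairWeight c z * ∏ i, poleWeight q u (z i) := by
  obtain ⟨C, _, hC, _, hC_le⟩ := exists_eventually_poleWeight_mem_Icc_mul hq u l
  have pole_le : ∀ᶠ z : Fin N → E in 𝓝 fun _ => q l, ∀ i,
      C * ‖z i - q l‖ₑ ^ (-u l) ≤ poleWeight q u (z i) :=
    nhds_pi (A := fun _ => E) ▸ Filter.eventually_pi fun _ => hC_le.mono fun _ hz => hz.1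
  refine ⟨2 ^ (-(c * N.choose 2)) * C ^ N,
    mul_ne_zero (ENNReal.rpow_pos two_pos ENNReal.ofNat_ne_top).ne' (pow_ne_zero N hC),
    pole_le.mono fun z hz => ?_⟩
  have norm_le (i : Fin N) : ‖z i - q l‖₊ ≤ ‖z - fun _ => q l‖₊ :=
    nnnorm_le_pi_nnnorm (z - fun _ => q l) i
  have pole_prod_le : (C * ‖z - fun _ => q l‖ₑ ^ (-u l)) ^ N ≤ ∏ i, poleWeight q u (z i) := by
    rw [← Fin.prod_const]
    refine Finset.prod_le_prod' fun i _ => ?_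
    exact (mul_le_mul_right (ennreal_rpow_le_rpow_of_nonpos (ENNReal.coe_le_coe.2 (norm_le i))
      (neg_nonpos.2 hu)) C).trans (hz i)
  calc 2 ^ (-(c * N.choose 2)) * C ^ N * ‖z - fun _ => q l‖ₑ ^ (-(c * N.choose 2 + u l * N))
      = 2 ^ (-(c * N.choose 2)) * ‖z - fun _ => q l‖ₑ ^ (-(c * N.choose 2)) *
          (C * ‖z - fun _ => q l‖ₑ ^ (-u l)) ^ N := by
        rw [neg_add, ennreal_rpow_add_of_nonpos _ (neg_nonpos.2 (by positivity))
          (neg_nonpos.2 (by positivity)), mul_pow, ← ENNReal.rpow_mul_natCast, neg_mul]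
        ring
    _ ≤ pairWeight c z * ∏ i, poleWeight q u (z i) :=
        mul_le_mul' (mul_rpow_le_pairWeight hc norm_le) pole_prod_le

end FullCollision

section Convergence

lemma exists_holder_exponent {κ : Type*} [Finite κ] {d c N : ℝ} {u : κ → ℝ} (hd : 0 < d)
    (hc : 0 ≤ c) (hpair : c * N < 2 * d) (hpole : ∀ l, c * (N - 1) < 2 * (d - u l)) :
    ∃ b, 0 < b ∧ c < 2 * b * d ∧ N * b ≤ 1 ∧ ∀ l, u l < d * (1 - (N - 1) * b) := by
  have pair_lt : N * (c / (2 * d)) < 1 := by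
    rw [← mul_div_assoc, div_lt_one (by positivity)]
    linarith
  have pole_lt (l : κ) : u l < d * (1 - (N - 1) * (c / (2 * d))) := by
    have expand : d * (1 - (N - 1) * (c / (2 * d))) = d - c * (N - 1) / 2 := by field_simp
    rw [expand]
    linarith [hpole l]
  have pair_nhds : ∀ᶠ b in 𝓝 (c / (2 * d)), N * b < 1 :=
    (by fun_prop : Continuous fun b => N * b).continuousAt.eventually_lt_const pair_lt
  have pole_nhds : ∀ᶠ b in 𝓝 (c / (2 * d)), ∀ l, u l < d * (1 - (N - 1) * b) :=
    Filter.eventually_all.2 fun l =>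
      (by fun_prop : Continuous fun b => d * (1 - (N - 1) * b)).continuousAt.eventually_const_lt
        (pole_lt l)
  obtain ⟨b, ⟨hNb, hub⟩, hcb⟩ :=
    (((pair_nhds.and pole_nhds).filter_mono nhdsWithin_le_nhds).and
      (self_mem_nhdsWithin (s := Set.Ioi (c / (2 * d))))).exists
  refine ⟨b, (by positivity : 0 ≤ c / (2 * d)).trans_lt hcb, ?_, hNb.le, hub⟩
  linarith [(div_lt_iff₀ (by positivity)).1 hcb]

variable {E : Type*} [NormedAddCommGroup E] [MeasurableSpace E] [BorelSpace E]
  [SecondCountableTopology E] {N : ℕ} {ν : Measure E} [SigmaFinite ν] {f : E → ℝ≥0∞} {σ : ℝ}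
  {C : ℝ≥0∞}

lemma lintegral_mul_starWeight_lt_top (hf : Measurable f) (hf_int : ∫⁻ x, f x ∂ν < ∞)
    (hC : C < ∞) (hσ : ∀ᵐ x ∂ν, ∫⁻ y, ‖y - x‖ₑ ^ (-σ) ∂ν ≤ C) (i : Fin N) :
    ∫⁻ z, f (z i) * starWeight σ i z ∂Measure.pi (fun _ => ν) < ∞ := by
  obtain ⟨n, rfl⟩ : ∃ n, N = n + 1 := Nat.exists_eq_succ_of_ne_zero i.pos.ne'
  calc ∫⁻ z, f (z i) * starWeight σ i z ∂Measure.pi (fun _ => ν)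
      = ∫⁻ x, f x * (∫⁻ y, ‖y - x‖ₑ ^ (-σ) ∂ν) ^ n ∂ν := lintegral_mul_starWeight ν hf σ i
    _ ≤ ∫⁻ x, f x * C ^ n ∂ν :=
        lintegral_mono_ae (hσ.mono fun x hx => mul_le_mul_right (pow_le_pow_left' hx n) _)
    _ = (∫⁻ x, f x ∂ν) * C ^ n := lintegral_mul_const _ hf
    _ < ∞ := ENNReal.mul_lt_top hf_int (ENNReal.pow_lt_top hC)

lemma lintegral_pairWeight_mul_prod_rpow_lt_top (hf : Measurable f) (hf_int : ∫⁻ x, f x ∂ν < ∞)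
    (hC : C < ∞) (hσ : ∀ᵐ x ∂ν, ∫⁻ y, ‖y - x‖ₑ ^ (-σ) ∂ν ≤ C) {b : ℝ} (hb : 0 ≤ b)
    (hNb : N * b ≤ 1) :
    ∫⁻ z : Fin N → E, pairWeight (2 * (σ * b)) z * ∏ i, f (z i) ^ (1 - (N - 1) * b)
      ∂Measure.pi (fun _ => ν) < ∞ := by
  have ht : 0 ≤ 1 - N * b := sub_nonneg.2 hNb
  have exponent_eq : 1 - (N - 1) * b = 1 - N * b + b := by ring
  simp only [exponent_eq, pairWeight_mul_prod_rpow_add hb ht]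
  have holder := ENNReal.lintegral_mul_prod_norm_pow_le (μ := Measure.pi fun _ : Fin N => ν)
    Finset.univ (g := fun z => ∏ i, f (z i)) (f := fun i z => f (z i) * starWeight σ i z)
    (Finset.aemeasurable_fun_prod _ fun i _ => (hf.comp (measurable_pi_apply i)).aemeasurable)
    (fun i _ => by fun_prop) (q := 1 - N * b) (p := fun _ => b) (by simp) ht fun _ _ => hb
  refine holder.trans_lt (ENNReal.mul_lt_top (ENNReal.rpow_lt_top_of_nonneg ht ?_) ?_)
  · rw [lintegral_pi_prod_eq_prod_lintegral (fun _ => ν) fun _ => hf]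
    exact ENNReal.prod_ne_top fun _ _ => hf_int.ne
  · exact ENNReal.prod_lt_top fun i _ => ENNReal.rpow_lt_top_of_nonneg hb
      (lintegral_mul_starWeight_lt_top hf hf_int hC hσ i).ne

end Convergence

section LocalIntegrability

variable {E κ : Type*} [NormedAddCommGroup E] [NormedSpace ℝ E] [FiniteDimensional ℝ E]
  [Nontrivial E] [MeasurableSpace E] [BorelSpace E] (μ : Measure E) [μ.IsAddHaarMeasure]

lemma setLIntegral_pairWeight_mul_prod_poleWeight_lt_top [Fintype κ] {q : κ → E}
    (hq : Function.Injective q) {u : κ → ℝ} {N : ℕ} {c : ℝ} (hc : 0 ≤ c)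
    (hpair : c * N < 2 * Module.finrank ℝ E)
    (hpole : ∀ l, c * (N - 1) < 2 * (Module.finrank ℝ E - u l)) {K : Set E} (hK : IsCompact K) :
    ∫⁻ z in Set.univ.pi fun _ : Fin N => K, pairWeight c z * ∏ i, poleWeight q u (z i)
      ∂Measure.pi (fun _ => μ) < ∞ := by
  have finrank_pos : (0 : ℝ) < Module.finrank ℝ E := Nat.cast_pos.2 Module.finrank_pos
  obtain ⟨b, hb, hcb, hNb, hub⟩ := exists_holder_exponent finrank_pos hc hpair hpole
  have hB : 0 < 1 - (N - 1) * b := by linarith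
  have pole_int : ∫⁻ x in K, poleWeight q (fun l => u l * (1 - (N - 1) * b)⁻¹) x ∂μ < ∞ :=
    setLIntegral_poleWeight_lt_top μ hq (fun l => (mul_inv_lt_iff₀ hB).2 (hub l)) hK
  have hσ : c / (2 * b) < Module.finrank ℝ E := (div_lt_iff₀' (by positivity)).2 hcb
  obtain ⟨C, hC, hCK⟩ := exists_forall_setLIntegral_enorm_sub_rpow_neg_le μ hσ hK.isBounded
  have finite := lintegral_pairWeight_mul_prod_rpow_lt_top (N := N) (measurable_poleWeight _ _)
    pole_int hC (ae_restrict_of_forall_mem hK.measurableSet hCK) hb.le hNb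
  have coupling_eq : 2 * (c / (2 * b) * b) = c := by field_simp
  rw [Measure.restrict_pi_pi]
  simpa only [poleWeight_rpow _ _ hB.le, inv_mul_cancel_right₀ hB.ne', coupling_eq] using finite

lemma setLIntegral_pairWeight_insertNth_eq_top {n : ℕ} [NeZero n] {c : ℝ} (hc : 0 ≤ c)
    (h : 2 * Module.finrank ℝ E ≤ c * (n + 1)) (i : Fin (n + 1)) (x : E) {s : Set (Fin n → E)}
    (hs : s ∈ 𝓝 fun _ => x) :
    ∫⁻ y in s, pairWeight c (i.insertNth x y : Fin (n + 1) → E) ∂Measure.pi (fun _ => μ) = ∞ := by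
  have finrank_le : (Module.finrank ℝ (Fin n → E) : ℝ) ≤ c * (n + 1).choose 2 := by
    rw [Module.finrank_pi_fintype, Finset.sum_const, Finset.card_univ, Fintype.card_fin,
      smul_eq_mul, Nat.cast_mul, Nat.cast_choose_two]
    push_cast
    nlinarith [(n.cast_nonneg : (0 : ℝ) ≤ n)]
  have norm_le (y : Fin n → E) (j : Fin (n + 1)) :
      ‖(i.insertNth x y : Fin (n + 1) → E) j - x‖₊ ≤ ‖y - fun _ => x‖₊ := by
    induction j using i.succAboveCases with
    | x => simp
    | p j =>
      rw [Fin.insertNth_apply_succAbove]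
      exact nnnorm_le_pi_nnnorm (y - fun _ => x) j
  exact setLIntegral_eq_top_of_eventually_mul_le
    (ENNReal.rpow_pos two_pos ENNReal.ofNat_ne_top).ne'
    (fun t ht => setLIntegral_enorm_sub_rpow_neg_eq_top (Measure.pi fun _ => μ) finrank_le ht)
    (.of_forall fun y => mul_rpow_le_pairWeight hc (norm_le y)) hs

lemma setLIntegral_pairWeight_eq_top {N : ℕ} (hN : 2 ≤ N) {c : ℝ} (hc : 0 ≤ c)
    (h : 2 * Module.finrank ℝ E ≤ c * N) (x : E) {s : Set (Fin N → E)} (hs : s ∈ 𝓝 fun _ => x) :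
    ∫⁻ z in s, pairWeight c z ∂Measure.pi (fun _ => μ) = ∞ := by
  obtain ⟨n, rfl⟩ := Nat.exists_eq_add_of_le' (Nat.one_le_of_lt hN)
  have : NeZero n := ⟨by lia⟩
  obtain ⟨r, hr, hrs⟩ := Metric.mem_nhds_iff.1 hs
  rw [ball_pi _ hr] at hrs
  have fiber_eq_top (a : E) (ha : a ∈ Metric.ball x r) :
      ∫⁻ y, pairWeight c ((0 : Fin (n + 1)).insertNth a y : Fin (n + 1) → E)
        ∂Measure.pi (fun _ => μ.restrict (Metric.ball x r)) = ∞ := by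
    rw [← Measure.restrict_pi_pi]
    exact setLIntegral_pairWeight_insertNth_eq_top μ hc (by exact_mod_cast h) 0 a
      (set_pi_mem_nhds Set.finite_univ fun _ _ => Metric.isOpen_ball.mem_nhds ha)
  refine top_le_iff.1 (le_trans ?_ (lintegral_mono_set hrs))
  rw [Measure.restrict_pi_pi, lintegral_pi_eq_lintegral_insertNth _ 0 (by fun_prop),
    setLIntegral_congr_fun measurableSet_ball fiber_eq_top, setLIntegral_const,
    ENNReal.top_mul (Metric.measure_ball_pos μ x hr).ne']

variable [Fintype κ] {q : κ → E}

lemma setLIntegral_pairWeight_mul_prod_poleWeight_eq_top (u : κ → ℝ) {N : ℕ} (hN : 2 ≤ N)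
    {c : ℝ} (hc : 0 ≤ c) (h : 2 * Module.finrank ℝ E ≤ c * N) {x : E} (hx : x ∉ Set.range q)
    {s : Set (Fin N → E)} (hs : s ∈ 𝓝 fun _ => x) :
    ∫⁻ z in s, pairWeight c z * ∏ i, poleWeight q u (z i) ∂Measure.pi (fun _ => μ) = ∞ := by
  obtain ⟨C, _, hC, _, hC_le⟩ := exists_eventually_poleWeight_mem_Icc u hx
  have pole_le : ∀ᶠ z : Fin N → E in 𝓝 fun _ => x, ∀ i, C ≤ poleWeight q u (z i) :=
    nhds_pi (A := fun _ => E) ▸ Filter.eventually_pi fun _ => hC_le.mono fun _ hz => hz.1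
  refine setLIntegral_eq_top_of_eventually_mul_le (pow_ne_zero N hC)
    (fun t ht => setLIntegral_pairWeight_eq_top μ hN hc h x ht) (pole_le.mono fun z hz => ?_) hs
  rw [mul_comm]
  gcongr
  simpa using Finset.prod_le_prod' fun i (_ : i ∈ Finset.univ) => hz i

lemma setLIntegral_pairWeight_mul_prod_poleWeight_eq_top_of_pole (hq : Function.Injective q)
    {u : κ → ℝ} {N : ℕ} [NeZero N] {c : ℝ} (hc : 0 ≤ c) {l : κ} (hu : 0 ≤ u l)
    (h : 2 * (Module.finrank ℝ E - u l) ≤ c * (N - 1)) {s : Set (Fin N → E)}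
    (hs : s ∈ 𝓝 fun _ => q l) :
    ∫⁻ z in s, pairWeight c z * ∏ i, poleWeight q u (z i) ∂Measure.pi (fun _ => μ) = ∞ := by
  have finrank_le : (Module.finrank ℝ (Fin N → E) : ℝ) ≤ c * N.choose 2 + u l * N := by
    rw [Module.finrank_pi_fintype, Finset.sum_const, Finset.card_univ, Fintype.card_fin,
      smul_eq_mul, Nat.cast_mul, Nat.cast_choose_two]
    nlinarith [(N.cast_nonneg : (0 : ℝ) ≤ N)]
  obtain ⟨C, hC, hC_le⟩ := exists_eventually_mul_rpow_le_pairWeight_mul_prod (N := N) hq hc hu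
  exact setLIntegral_eq_top_of_eventually_mul_le hC
    (fun t ht => setLIntegral_enorm_sub_rpow_neg_eq_top (Measure.pi fun _ => μ) finrank_le ht)
    hC_le hs

theorem microscopic_threshold_log_fano_curve_general (hq : Function.Injective q) (u : κ → ℝ)
    {N : ℕ} (hN : 2 ≤ N) {c : ℝ} (hc : 0 ≤ c) :
    (∀ p : Fin N → E, ∃ s ∈ 𝓝 p,
      ∫⁻ z in s, pairWeight c z * ∏ i, poleWeight q u (z i) ∂Measure.pi (fun _ => μ) ≠ ∞) ↔
      c * N < 2 * Module.finrank ℝ E ∧ ∀ l, c * (N - 1) < 2 * (Module.finrank ℝ E - u l) := by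
  have : NeZero N := ⟨by lia⟩
  refine ⟨fun integrable => ?_, fun ⟨hpair, hpole⟩ p => ?_⟩
  · have hpair : c * N < 2 * Module.finrank ℝ E := by
      by_contra! h
      have : Infinite E := Module.Free.infinite ℝ E
      obtain ⟨x, hx⟩ := (Set.finite_range q).exists_notMem
      obtain ⟨s, hs, hs_int⟩ := integrable fun _ => x
      exact hs_int (setLIntegral_pairWeight_mul_prod_poleWeight_eq_top μ u hN hc h hx hs)
    refine ⟨hpair, fun l => ?_⟩
    by_contra! h
    obtain ⟨s, hs, hs_int⟩ := integrable fun _ => q l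
    exact hs_int (setLIntegral_pairWeight_mul_prod_poleWeight_eq_top_of_pole μ hq hc
      (by linarith) h hs)
  · refine ⟨Set.univ.pi fun _ => Metric.closedBall 0 (‖p‖ + 1), ?_,
      (setLIntegral_pairWeight_mul_prod_poleWeight_lt_top μ hq hc hpair hpole
        (isCompact_closedBall _ _)).ne⟩
    refine set_pi_mem_nhds Set.finite_univ fun i _ => Metric.closedBall_mem_nhds_of_mem ?_
    rw [mem_ball_zero_iff]
    linarith [norm_le_pi_norm p i]

end LocalIntegrability

lemma lt_min_threshold_iff {ι : Type*} {s : Finset ι} (hs : s.Nonempty) {w : ι → ℝ}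
    {V N γ : ℝ} (hV : 0 < V) (hN : 1 < N) :
    γ < min (2 * (1 - 1 / N) / V) (s.inf' hs fun l => 2 * (1 - w l) / V) ↔
      2 * γ / ((N - 1) / V) * N < 2 * 2 ∧
        ∀ l ∈ s, 2 * γ / ((N - 1) / V) * (N - 1) < 2 * (2 - 2 * w l) := by
  have hN_pos : 0 < N := by linarith
  have hN_sub : 0 < N - 1 := by linarith
  have pair_eq : 2 * γ / ((N - 1) / V) * N = 2 * γ * V * N / (N - 1) := by field_simp
  have pole_eq : 2 * γ / ((N - 1) / V) * (N - 1) = 2 * γ * V := by field_simp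
  rw [lt_min_iff, Finset.lt_inf'_iff, pair_eq, pole_eq]
  refine and_congr ?_ (forall₂_congr fun l _ => ?_)
  · rw [lt_div_iff₀ hV, one_sub_div hN_pos.ne', mul_div_assoc', lt_div_iff₀ hN_pos,
      div_lt_iff₀ hN_sub]
    constructor <;> intro h <;> linarith
  · rw [lt_div_iff₀ hV]
    constructor <;> intro h <;> linarith

/-- **Microscopic stability threshold of a log Fano curve.** Let `Δ = Σ w_l q_l` with distinct
points `q_l ∈ ℂ`, weights `w_l ∈ (0,1)`, and `V = 2 - Σ w_l > 0`; let `N ≥ 2`, `k = (N-1)/V`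
and `γ > 0`. The function
`z ↦ ∏_{i<j} |z_i - z_j| ^ (-2γ/k) · ∏_i ∏_l |z_i - q_l| ^ (-2 w_l)` is locally integrable on
`ℂ^N` if and only if `γ < min( 2(1-1/N)/V , min_l 2(1-w_l)/V )`. -/
theorem microscopic_threshold_log_fano_curve (m : ℕ) (hm : 0 < m)
    (w : Fin m → ℝ) (hw : ∀ l, w l ∈ Set.Ioo (0 : ℝ) 1)
    (hV : 0 < 2 - ∑ j, w j)
    (q : Fin m → ℂ) (hq : Function.Injective q)
    (N : ℕ) (hN : 2 ≤ N) (γ : ℝ) (hγ : 0 < γ) :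
    (∀ p : Fin N → ℂ, ∃ s ∈ 𝓝 p,
        (∫⁻ z in s,
          (∏ a ∈ Finset.univ.filter (fun a : Fin N × Fin N => a.1 < a.2),
            (ENNReal.ofReal ‖z a.1 - z a.2‖) ^
              (-(2 * γ / (((N : ℝ) - 1) / (2 - ∑ j, w j))))) *
          ∏ i, ∏ l, (ENNReal.ofReal ‖z i - q l‖) ^ (-(2 * w l)) ∂volume) ≠ ∞) ↔
      γ < min (2 * (1 - 1 / (N : ℝ)) / (2 - ∑ j, w j))
          (Finset.univ.inf' (Finset.univ_nonempty_iff.mpr (Fin.pos_iff_nonempty.mp hm))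
            fun l => 2 * (1 - w l) / (2 - ∑ j, w j)) := by
  have one_lt : (1 : ℝ) < N := by exact_mod_cast hN
  have coupling_nonneg : 0 ≤ 2 * γ / (((N : ℝ) - 1) / (2 - ∑ j, w j)) := by
    have := sub_pos.2 one_lt
    positivity
  have main := microscopic_threshold_log_fano_curve_general (volume : Measure ℂ) hq
    (fun l => 2 * w l) hN coupling_nonneg
  rw [lt_min_threshold_iff _ hV one_lt]
  simpa only [ofReal_norm, pairWeight, poleWeight, Complex.finrank_real_complex, Nat.cast_ofNat,
    Finset.mem_univ, forall_const, volume_pi] using main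
end

section
/- Let w ∈ (0,1), V := 2 − 2w, let N ≥ 4 be an integer, set k := (N−1)/V, let q₀ ≠ q₁ be points of ℂ, and let γ > 0. Then the function z ↦ ∏_{1≤i<j≤N} |z_i − z_j|^{−2γ/k} · ∏_{i=1}^N (|z_i − q₀| |z_i − q₁|)^{−2w} is Lebesgue integrable on a neighborhood of every point p ∈ ℂ^N such that at most ⌊N/2⌋ of the coordinates of p equal q₀ and at most ⌊N/2⌋ equal q₁, if and only if γ < min{ 2(1 − 1/N)/V , (N−1)/(⌊N/2⌋ − 1) }. -/
open MeasureTheory Topology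
open scoped ENNReal Classical

/-!
Near a configuration `p` only the interactions inside the clusters of coinciding points are
singular, so integrability at `p` is that of a product over clusters in the displacements
`u = z - p`.

Sufficiency: weighted AM-GM bounds the factor of a cluster by a maximum of products over stars, one
centred at the base point and one at each member of the cluster. Altogether the density is at most a
sum, over forests of stars, of products of single powers of the edge lengths; a linear shear makes
the edges independent coordinates, and the two numerical conditions say exactly that the power can
be taken below the dimension.

Necessity: shrinking a cluster by a factor `ε`, onto the base point or onto one of its members,
shrinks the volume of a box at most as fast as the density grows, so the integral over the shrunken
box does not tend to zero with its volume.
-/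

open Filter Module

section IsRegularAt

variable {X : Type*} [TopologicalSpace X] {p : X}

/-- `f` is continuous at `p`, with a value other than `0` and `∞`: a factor of this kind does not
affect integrability near `p`. -/
structure IsRegularAt (f : X → ℝ≥0∞) (p : X) : Prop where
  continuousAt : ContinuousAt f p
  ne_zero : f p ≠ 0
  ne_top : f p ≠ ∞

theorem IsRegularAt.mul {f g : X → ℝ≥0∞} (hf : IsRegularAt f p) (hg : IsRegularAt g p) :
    IsRegularAt (fun x => f x * g x) p where
  continuousAt := ENNReal.Tendsto.mul hf.continuousAt (.inl hf.ne_zero) hg.continuousAt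
    (.inl hg.ne_zero)
  ne_zero := mul_ne_zero hf.ne_zero hg.ne_zero
  ne_top := ENNReal.mul_ne_top hf.ne_top hg.ne_top

theorem IsRegularAt.finset_prod {κ : Type*} {f : κ → X → ℝ≥0∞} {s : Finset κ}
    (hf : ∀ k ∈ s, IsRegularAt (f k) p) : IsRegularAt (fun x => ∏ k ∈ s, f k x) p where
  continuousAt := ENNReal.tendsto_finsetProd_of_ne_top s (fun k hk => (hf k hk).continuousAt)
    fun k hk => (hf k hk).ne_top
  ne_zero := Finset.prod_ne_zero_iff.2 fun k hk => (hf k hk).ne_zero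
  ne_top := ENNReal.prod_ne_top fun k hk => (hf k hk).ne_top

theorem isRegularAt_enorm_rpow {E : Type*} [NormedAddCommGroup E] {g : X → E}
    (hg : ContinuousAt g p) (hp : g p ≠ 0) (s : ℝ) : IsRegularAt (fun x => ‖g x‖ₑ ^ s) p where
  continuousAt := (continuous_enorm.continuousAt.comp hg).ennrpow_const s
  ne_zero := by simp [ENNReal.rpow_eq_zero_iff, hp]
  ne_top := by simp [ENNReal.rpow_eq_top_iff, hp]

end IsRegularAt

section LIntegrableNear

variable {X Y : Type*} [MeasurableSpace X] [MeasurableSpace Y] [TopologicalSpace X]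
  [TopologicalSpace Y]

/-- `f` has finite integral over some neighbourhood of `p`. The neighbourhood need not be
measurable, nor `f`. -/
def LIntegrableNear (μ : Measure X) (f : X → ℝ≥0∞) (p : X) : Prop :=
  ∃ s ∈ 𝓝 p, ∫⁻ x in s, f x ∂μ ≠ ∞

namespace LIntegrableNear

theorem of_eventually_le_const_mul [OpensMeasurableSpace X] {μ : Measure X} {f g : X → ℝ≥0∞}
    {p : X} {C : ℝ≥0∞} (hg : LIntegrableNear μ g p) (hC : C ≠ ∞)
    (hfg : ∀ᶠ x in 𝓝 p, f x ≤ C * g x) : LIntegrableNear μ f p := by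
  obtain ⟨s, hs, hgs⟩ := hg
  obtain ⟨t, hts, ht, hpt⟩ := mem_nhds_iff.1 (inter_mem hs hfg)
  refine ⟨t, ht.mem_nhds hpt, ne_top_of_le_ne_top (ENNReal.mul_ne_top hC hgs) ?_⟩
  calc ∫⁻ x in t, f x ∂μ ≤ ∫⁻ x in t, C * g x ∂μ :=
        setLIntegral_mono' ht.measurableSet fun x hx => (hts hx).2
    _ = C * ∫⁻ x in t, g x ∂μ := lintegral_const_mul' _ _ hC
    _ ≤ C * ∫⁻ x in s, g x ∂μ := by gcongr; exact fun x hx => (hts hx).1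

theorem mul_continuousAt [OpensMeasurableSpace X] {μ : Measure X} {f h : X → ℝ≥0∞} {p : X}
    (hf : LIntegrableNear μ f p) (hh : ContinuousAt h p) (hp : h p ≠ ∞) :
    LIntegrableNear μ (fun x => f x * h x) p := by
  refine hf.of_eventually_le_const_mul (C := h p + 1) (by simp [hp]) ?_
  filter_upwards [hh.eventually_lt_const (ENNReal.lt_add_right hp one_ne_zero)] with x hx
  rw [mul_comm]
  gcongr

theorem finset_sum {κ : Type*} {μ : Measure X} {f : κ → X → ℝ≥0∞} {p : X}
    {s : Finset κ} (hm : ∀ k ∈ s, Measurable (f k)) (hf : ∀ k ∈ s, LIntegrableNear μ (f k) p) :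
    LIntegrableNear μ (fun x => ∑ k ∈ s, f k x) p := by
  choose! t ht hft using hf
  refine ⟨⋂ k ∈ s, t k, (biInter_finset_mem s).2 ht, ?_⟩
  rw [lintegral_finsetSum _ hm]
  refine ENNReal.sum_ne_top.2 fun k hk => ne_top_of_le_ne_top (hft k hk) ?_
  exact lintegral_mono_set (Set.biInter_subset_of_mem hk)

theorem comp_homeomorph [BorelSpace X] [BorelSpace Y] {μ : Measure X} {ν : Measure Y}
    {f : Y → ℝ≥0∞} {p : X} {c : ℝ≥0∞} (e : X ≃ₜ Y) (hf : LIntegrableNear ν f (e p)) (hc : c ≠ ∞)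
    (he : μ.map e = c • ν) : LIntegrableNear μ (f ∘ e) p := by
  obtain ⟨s, hs, hfs⟩ := hf
  refine ⟨e ⁻¹' s, e.continuous.continuousAt.preimage_mem_nhds hs, ?_⟩
  calc ∫⁻ x in e ⁻¹' s, f (e x) ∂μ = ∫⁻ y in s, f y ∂c • ν := by
        rw [← he, e.measurableEmbedding.restrict_map, e.measurableEmbedding.lintegral_map]
    _ = c * ∫⁻ y in s, f y ∂ν := by rw [Measure.restrict_smul, lintegral_smul_measure, smul_eq_mul]
    _ ≠ ∞ := ENNReal.mul_ne_top hc hfs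

end LIntegrableNear

theorem lintegrableNear_mul_iff [OpensMeasurableSpace X] {μ : Measure X} {f h : X → ℝ≥0∞} {p : X}
    (hh : IsRegularAt h p) : LIntegrableNear μ (fun x => f x * h x) p ↔ LIntegrableNear μ f p := by
  refine ⟨fun hfh => ?_, fun hf => hf.mul_continuousAt hh.continuousAt hh.ne_top⟩
  refine (hfh.mul_continuousAt hh.continuousAt.inv
    (by simpa using hh.ne_zero)).of_eventually_le_const_mul ENNReal.one_ne_top ?_
  filter_upwards [hh.continuousAt.eventually_ne hh.ne_zero,
    hh.continuousAt.eventually_ne hh.ne_top] with x hx₀ hx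
  rw [Pi.inv_apply, one_mul, mul_assoc, ENNReal.mul_inv_cancel hx₀ hx, mul_one]

theorem lintegrableNear_comp_sub_iff {G : Type*} [AddGroup G] [TopologicalSpace G]
    [IsTopologicalAddGroup G] [MeasurableSpace G] [BorelSpace G] {μ : Measure G}
    [μ.IsAddRightInvariant] {f : G → ℝ≥0∞} {p : G} :
    LIntegrableNear μ (fun x => f (x - p)) p ↔ LIntegrableNear μ f 0 := by
  have hne := ENNReal.one_ne_top
  constructor <;> intro hf
  · convert LIntegrableNear.comp_homeomorph (μ := μ) (p := 0) (c := 1) (Homeomorph.addRight p)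
      (by simpa using hf) hne (by simp [map_add_right_eq_self])
    ext x
    simp
  · exact LIntegrableNear.comp_homeomorph (c := 1) (Homeomorph.subRight p) (by simpa using hf) hne
      (by simp [map_sub_right_eq_self])

end LIntegrableNear

section Haar

variable {F : Type*} [NormedAddCommGroup F] [NormedSpace ℝ F] [FiniteDimensional ℝ F]
  [MeasurableSpace F] [BorelSpace F] {μ : Measure F} [μ.IsAddHaarMeasure]

theorem LIntegrableNear.comp_continuousLinearEquiv {f : F → ℝ≥0∞} {p : F} (L : F ≃L[ℝ] F)
    (hf : LIntegrableNear μ f (L p)) : LIntegrableNear μ (f ∘ L) p := by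
  have hdet : LinearMap.det ((L : F →L[ℝ] F) : F →ₗ[ℝ] F) ≠ 0 :=
    L.toLinearEquiv.isUnit_det'.ne_zero
  exact hf.comp_homeomorph L.toHomeomorph ENNReal.ofReal_ne_top
    (Measure.map_linearMap_addHaar_eq_smul_addHaar μ hdet)

theorem lintegrableNear_enorm_rpow [Nontrivial F] {t : ℝ} (ht : t < finrank ℝ F) :
    LIntegrableNear μ (fun u => ‖u‖ₑ ^ (-t)) 0 := by
  have hint : LocallyIntegrable (fun u : F => ‖u‖ ^ (-t)) μ :=
    locallyIntegrable_of_norm_le_rpow (C := 1) finrank_pos ht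
      (ae_of_all _ fun u => by rw [one_mul, Real.norm_of_nonneg (by positivity)])
      (measurable_norm.pow_const _).aestronglyMeasurable
  obtain ⟨s, hs, hfin⟩ := hint 0
  refine ⟨s, hs, ne_of_eq_of_ne (lintegral_congr_ae (ae_restrict_of_ae ?_)) hfin.2.ne⟩
  filter_upwards [compl_mem_ae_iff.2 (measure_singleton (0 : F))] with u hu
  rw [← ofReal_norm, ENNReal.ofReal_rpow_of_pos (norm_pos_iff.2 hu),
    Real.enorm_of_nonneg (by positivity)]

end Haar

theorem lintegral_fintype_prod_ne_top {ι : Type*} [Fintype ι] {X : ι → Type*}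
    [∀ i, MeasurableSpace (X i)] {μ : ∀ i, Measure (X i)} [∀ i, SigmaFinite (μ i)]
    {g : ∀ i, X i → ℝ≥0∞} (hg : ∀ i, AEMeasurable (g i) (μ i)) (hfin : ∀ i, ∫⁻ x, g i x ∂μ i ≠ ∞) :
    ∫⁻ z, ∏ i, g i (z i) ∂Measure.pi μ ≠ ∞ := by
  have hint : Integrable (fun z : ∀ i, X i => ∏ i, (g i (z i)).toReal) (Measure.pi μ) :=
    .fintype_prod_dep fun i => integrable_toReal_of_lintegral_ne_top (hg i) (hfin i)
  have hlt : ∀ i, ∀ᵐ z ∂Measure.pi μ, g i (z i) < ∞ := fun i =>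
    (Measure.quasiMeasurePreserving_eval μ i).ae (ae_lt_top' (hg i) (hfin i))
  refine ne_of_eq_of_ne (lintegral_congr_ae ?_) hint.2.ne
  filter_upwards [ae_all_iff.2 hlt] with z hz
  rw [Real.enorm_of_nonneg (Finset.prod_nonneg fun i _ => ENNReal.toReal_nonneg),
    ENNReal.ofReal_prod_of_nonneg fun i _ => ENNReal.toReal_nonneg]
  exact Finset.prod_congr rfl fun i _ => (ENNReal.ofReal_toReal (hz i).ne).symm

theorem LIntegrableNear.fintype_prod {ι : Type*} [Fintype ι] {X : ι → Type*}
    [∀ i, MeasurableSpace (X i)] [∀ i, TopologicalSpace (X i)]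
    {μ : ∀ i, Measure (X i)} [∀ i, SigmaFinite (μ i)] {g : ∀ i, X i → ℝ≥0∞} {p : ∀ i, X i}
    (hg : ∀ i, Measurable (g i)) (hfin : ∀ i, LIntegrableNear (μ i) (g i) (p i)) :
    LIntegrableNear (Measure.pi μ) (fun z => ∏ i, g i (z i)) p := by
  choose s hs hgs using hfin
  refine ⟨Set.univ.pi s, set_pi_mem_nhds Set.finite_univ fun i _ => hs i, ?_⟩
  rw [Measure.restrict_pi_pi]
  exact lintegral_fintype_prod_ne_top (fun i => (hg i).aemeasurable) hgs

section Cluster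

variable {ι κ : Type*} [Fintype ι] [DecidableEq ι] [DecidableEq κ]

/-- The indices colliding at `v` in the configuration `c`. -/
abbrev cluster (c : ι → κ) (v : κ) : Finset ι := {i | c i = v}

/-- The leading part of the Gibbs density near a configuration `c`, in the displacements `u`:
only interactions inside clusters are kept, and `β v` is the exponent of the weight felt by the
points colliding at `v`. Each unordered pair occurs twice, hence the exponent `a / 2`. -/
noncomputable def clusterDensity {E : Type*} [NormedAddCommGroup E] (a : ℝ) (β : κ → ℝ)
    (c : ι → κ) (u : ι → E) : ℝ≥0∞ :=
  ∏ i, (‖u i‖ₑ ^ (-β (c i)) * ∏ j ∈ (cluster c (c i)).erase i, ‖u i - u j‖ₑ ^ (-(a / 2)))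

end Cluster

section StarForest

variable {ι κ : Type*} [DecidableEq ι] {m : ι → ι → ℝ≥0∞} {β : ι → ℝ} {a t : ℝ}

theorem prod_rpow_mul_prod_erase_rpow_le {I : Finset ι} {M : ℝ≥0∞} (hm : ∀ i ∈ I, 1 ≤ m i i)
    (ha : 0 ≤ a) (ht : 0 < t) (hcard : a / 2 * I.card ≤ t)
    (hβ : ∀ i ∈ I, β i + a / 2 * (I.card - 1) ≤ t) (hroots : ∏ i ∈ I, m i i ^ t ≤ M)
    (hstar : ∀ k ∈ I, ∏ i ∈ I, m k i ^ t ≤ M) :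
    ∏ i ∈ I, (m i i ^ β i * ∏ j ∈ I.erase i, m i j ^ (a / 2)) ≤ M := by
  -- The left side is at most a weighted geometric mean of the products in `hroots` (weight `l`)
  -- and `hstar` (weight `s` each).
  obtain ⟨s, hs, hts⟩ : ∃ s, 0 ≤ s ∧ t * s = a / 2 :=
    ⟨a / 2 / t, by positivity, mul_div_cancel₀ _ ht.ne'⟩
  obtain ⟨l, hl⟩ : ∃ l : ℝ, l + s * I.card = 1 := ⟨_, sub_add_cancel _ _⟩
  have htl : t * l = t - a / 2 * I.card := by rw [← hts, eq_sub_of_add_eq hl]; ring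
  have hl₀ : 0 ≤ l := nonneg_of_mul_nonneg_right (by linarith) ht
  have hterm : ∀ i ∈ I, m i i ^ β i * ∏ j ∈ I.erase i, m i j ^ (a / 2) ≤
      (m i i ^ t) ^ l * (∏ j ∈ I, m i j ^ t) ^ s := fun i hi => by
    rw [← ENNReal.prod_rpow_of_nonneg hs, ← Finset.mul_prod_erase I _ hi, ← mul_assoc]
    simp only [← ENNReal.rpow_mul, hts]
    rw [← ENNReal.rpow_add_of_nonneg _ _ (by positivity) (by positivity)]
    gcongr
    · exact hm i hi
    · linarith [hβ i hi]
  calc ∏ i ∈ I, (m i i ^ β i * ∏ j ∈ I.erase i, m i j ^ (a / 2))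
      ≤ ∏ i ∈ I, ((m i i ^ t) ^ l * (∏ j ∈ I, m i j ^ t) ^ s) := Finset.prod_le_prod' hterm
    _ = (∏ i ∈ I, m i i ^ t) ^ l * ∏ i ∈ I, (∏ j ∈ I, m i j ^ t) ^ s := by
        rw [Finset.prod_mul_distrib, ENNReal.prod_rpow_of_nonneg hl₀]
    _ ≤ M ^ l * ∏ _i ∈ I, M ^ s := by
        gcongr with i hi
        exact hstar i hi
    _ = M := by
        rw [Finset.prod_const, ← ENNReal.rpow_natCast, ← ENNReal.rpow_mul,
          ← ENNReal.rpow_add_of_nonneg _ _ hl₀ (by positivity), hl, ENNReal.rpow_one]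

theorem exists_idempotent_on_prod_le {I : Finset ι} (hm : ∀ i ∈ I, 1 ≤ m i i) (ha : 0 ≤ a)
    (ht : 0 < t) (hcard : a / 2 * I.card ≤ t) (hβ : ∀ i ∈ I, β i + a / 2 * (I.card - 1) ≤ t) :
    ∃ σ : ι → ι, (∀ i ∈ I, σ i ∈ I) ∧ (∀ i ∈ I, σ (σ i) = σ i) ∧
      ∏ i ∈ I, (m i i ^ β i * ∏ j ∈ I.erase i, m i j ^ (a / 2)) ≤ ∏ i ∈ I, m (σ i) i ^ t := by
  by_contra! h
  have hroots := h id (by simp) (by simp)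
  have hstar := fun k hk => h (fun _ => k) (fun _ _ => hk) fun _ _ => rfl
  have hsup := max_lt hroots ((Finset.sup_lt_iff (bot_le.trans_lt hroots)).2 hstar)
  refine hsup.not_ge (prod_rpow_mul_prod_erase_rpow_le hm ha ht hcard hβ (le_max_left _ _) ?_)
  exact fun k hk => (Finset.le_sup (f := fun k => ∏ i ∈ I, m k i ^ t) hk).trans (le_max_right _ _)

theorem exists_idempotent_prod_le [Fintype ι] [DecidableEq κ] {c : ι → κ} (hm : ∀ i, 1 ≤ m i i)
    (ha : 0 ≤ a) (ht : 0 < t) (hcard : ∀ i, a / 2 * (cluster c (c i)).card ≤ t)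
    (hβ : ∀ i, β i + a / 2 * ((cluster c (c i)).card - 1) ≤ t) :
    ∃ σ : ι → ι, (∀ i, σ (σ i) = σ i) ∧
      ∏ i, (m i i ^ β i * ∏ j ∈ (cluster c (c i)).erase i, m i j ^ (a / 2)) ≤
        ∏ i, m (σ i) i ^ t := by
  have hblock : ∀ v ∈ Set.range c, ∃ σ : ι → ι, (∀ i ∈ cluster c v, σ i ∈ cluster c v) ∧
      (∀ i ∈ cluster c v, σ (σ i) = σ i) ∧
      ∏ i ∈ cluster c v, (m i i ^ β i * ∏ j ∈ (cluster c v).erase i, m i j ^ (a / 2)) ≤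
        ∏ i ∈ cluster c v, m (σ i) i ^ t := by
    rintro _ ⟨i, rfl⟩
    refine exists_idempotent_on_prod_le (fun k _ => hm k) ha ht (hcard i) fun k hk => ?_
    simpa only [(Finset.mem_filter_univ _).1 hk] using hβ k
  have : Nonempty (ι → ι) := ⟨id⟩
  choose! s hmaps hidem hle using hblock
  have hmem : ∀ i, i ∈ cluster c (c i) := fun i => by simp
  have hs : ∀ i, c (s (c i) i) = c i := fun i => by
    simpa using hmaps (c i) ⟨i, rfl⟩ i (hmem i)
  refine ⟨fun i => s (c i) i, fun i => ?_, ?_⟩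
  · simpa only [hs] using hidem (c i) ⟨i, rfl⟩ i (hmem i)
  simp only [← Finset.prod_fiberwise_of_maps_to (s := Finset.univ) (t := Finset.univ.image c)
    fun i _ => Finset.mem_image_of_mem c (Finset.mem_univ i)]
  refine Finset.prod_le_prod' fun v hv => ?_
  refine le_of_eq_of_le ?_ ((hle v (by simpa using hv)).trans_eq ?_) <;>
  · refine Finset.prod_congr rfl fun i hi => ?_
    rw [(Finset.mem_filter_univ _).1 hi]

end StarForest

section Shear

variable {ι R E : Type*} [DecidableEq ι] [Semiring R] [AddCommGroup E] [Module R E]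
  [TopologicalSpace E] [IsTopologicalAddGroup E]

variable (R) in
/-- The shear attached to an idempotent map `σ`, i.e. to a forest of stars in which `i` is a leaf
attached to the root `σ i`: each leaf is measured relative to its root. -/
def shear (σ : ι → ι) (hσ : ∀ i, σ (σ i) = σ i) : (ι → E) ≃L[R] (ι → E) where
  toFun u i := if σ i = i then u i else u i - u (σ i)
  invFun v i := if σ i = i then v i else v i + v (σ i)
  map_add' u v := by
    ext i
    simp only [Pi.add_apply]
    split_ifs
    exacts [rfl, add_sub_add_comm ..]
  map_smul' r u := by
    ext i
    simp only [Pi.smul_apply, RingHom.id_apply]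
    split_ifs
    exacts [rfl, (smul_sub ..).symm]
  left_inv u := by ext i; simp only [hσ, if_true]; split_ifs <;> simp
  right_inv v := by ext i; simp only [hσ, if_true]; split_ifs <;> simp
  continuous_toFun := continuous_pi fun i => by split_ifs <;> fun_prop
  continuous_invFun := continuous_pi fun i => by split_ifs <;> fun_prop

theorem shear_apply (σ : ι → ι) (hσ : ∀ i, σ (σ i) = σ i) (u : ι → E) (i : ι) :
    shear R σ hσ u i = if σ i = i then u i else u i - u (σ i) := rfl

theorem shear_symm_apply (σ : ι → ι) (hσ : ∀ i, σ (σ i) = σ i) (v : ι → E) (i : ι) :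
    (shear R σ hσ).symm v i = if σ i = i then v i else v i + v (σ i) := rfl

end Shear

section Sufficiency

variable {ι κ E : Type*} [Fintype ι] [DecidableEq ι] [DecidableEq κ] [NormedAddCommGroup E]
  [NormedSpace ℝ E] {a : ℝ} {β : κ → ℝ} {c : ι → κ}

theorem exists_clusterDensity_le_prod_shear {t : ℝ} {u : ι → E} (ha : 0 ≤ a) (ht : 0 < t)
    (hcard : ∀ i, a / 2 * (cluster c (c i)).card ≤ t)
    (hβ : ∀ i, β (c i) + a / 2 * ((cluster c (c i)).card - 1) ≤ t) (hu : ∀ i, ‖u i‖ₑ ≤ 1) :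
    ∃ (σ : ι → ι) (hσ : ∀ i, σ (σ i) = σ i),
      clusterDensity a β c u ≤ ∏ i, ‖shear ℝ σ hσ u i‖ₑ ^ (-t) := by
  let m : ι → ι → ℝ≥0∞ := fun k i => ‖if k = i then u i else u i - u k‖ₑ⁻¹
  have hdiag : ∀ i, m i i = ‖u i‖ₑ⁻¹ := fun i => by simp [m]
  obtain ⟨σ, hσ, hle⟩ := exists_idempotent_prod_le (m := m) (β := fun i => β (c i))
    (fun i => by rw [hdiag]; exact ENNReal.one_le_inv.2 (hu i)) ha ht hcard hβ
  refine ⟨σ, hσ, le_of_eq_of_le ?_ (hle.trans_eq ?_)⟩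
  · refine Finset.prod_congr rfl fun i _ => ?_
    rw [hdiag, ENNReal.inv_rpow, ← ENNReal.rpow_neg]
    congr 1
    refine Finset.prod_congr rfl fun j hj => ?_
    simp only [m, if_neg (Finset.ne_of_mem_erase hj).symm, ENNReal.inv_rpow,
      ← ENNReal.rpow_neg, enorm_sub_rev (u i)]
  · simp only [m, shear_apply, ENNReal.inv_rpow, ← ENNReal.rpow_neg]

variable [FiniteDimensional ℝ E] [MeasurableSpace E] [BorelSpace E]

theorem measurable_prod_enorm_shear_rpow (σ : ι → ι) (hσ : ∀ i, σ (σ i) = σ i) (t : ℝ) :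
    Measurable fun u : ι → E => ∏ i, ‖shear ℝ σ hσ u i‖ₑ ^ (-t) := by
  have hmeas : Measurable (shear ℝ σ hσ : (ι → E) → ι → E) := (shear ℝ σ hσ).continuous.measurable
  fun_prop

variable [Nontrivial E] {μ : Measure E} [μ.IsAddHaarMeasure]

theorem lintegrableNear_prod_enorm_shear_rpow (σ : ι → ι) (hσ : ∀ i, σ (σ i) = σ i) {t : ℝ}
    (ht : t < finrank ℝ E) :
    LIntegrableNear (Measure.pi fun _ => μ)
      (fun u : ι → E => ∏ i, ‖shear ℝ σ hσ u i‖ₑ ^ (-t)) 0 := by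
  have hprod : LIntegrableNear (Measure.pi fun _ => μ) (fun v : ι → E => ∏ i, ‖v i‖ₑ ^ (-t)) 0 :=
    .fintype_prod (g := fun _ u => ‖u‖ₑ ^ (-t)) (by fun_prop) fun _ => lintegrableNear_enorm_rpow ht
  exact LIntegrableNear.comp_continuousLinearEquiv (shear ℝ σ hσ : (ι → E) ≃L[ℝ] (ι → E))
    (by rwa [map_zero])

theorem lintegrableNear_clusterDensity (ha : 0 ≤ a)
    (hcard : ∀ i, a / 2 * (cluster c (c i)).card < finrank ℝ E)
    (hβ : ∀ i, β (c i) + a / 2 * ((cluster c (c i)).card - 1) < finrank ℝ E) :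
    LIntegrableNear (Measure.pi fun _ => μ) (clusterDensity (E := E) a β c) 0 := by
  have hlarge : ∀ᶠ t in 𝓝 (finrank ℝ E : ℝ), 0 < t ∧
      (∀ i, a / 2 * (cluster c (c i)).card ≤ t) ∧
      ∀ i, β (c i) + a / 2 * ((cluster c (c i)).card - 1) ≤ t :=
    (eventually_gt_nhds (by exact_mod_cast finrank_pos)).and <|
      (eventually_all.2 fun i => eventually_ge_nhds (hcard i)).and <|
        eventually_all.2 fun i => eventually_ge_nhds (hβ i)
  obtain ⟨t, ht, ht₀, htcard, htβ⟩ :=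
    ((eventually_mem_nhdsWithin (s := Set.Iio (finrank ℝ E : ℝ))).and
      (nhdsWithin_le_nhds hlarge)).exists
  have hsum := LIntegrableNear.finset_sum (s := Finset.univ)
    (fun (σ : {σ : ι → ι // ∀ i, σ (σ i) = σ i}) _ =>
      measurable_prod_enorm_shear_rpow (E := E) σ.1 σ.2 t)
    fun σ _ => lintegrableNear_prod_enorm_shear_rpow (μ := μ) σ.1 σ.2 ht
  refine hsum.of_eventually_le_const_mul ENNReal.one_ne_top ?_
  filter_upwards [Metric.closedBall_mem_nhds _ one_pos] with u hu
  have hu₁ : ∀ i, ‖u i‖ₑ ≤ 1 := fun i => by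
    rw [← ofReal_norm, ENNReal.ofReal_le_one]
    exact (norm_le_pi_norm u i).trans (mem_closedBall_zero_iff.1 hu)
  obtain ⟨σ, hσ, hle⟩ := exists_clusterDensity_le_prod_shear ha ht₀ htcard htβ hu₁
  have hterm := Finset.single_le_sum_of_canonicallyOrdered (s := Finset.univ)
    (f := fun σ : {σ : ι → ι // ∀ i, σ (σ i) = σ i} => ∏ i, ‖shear ℝ σ.1 σ.2 u i‖ₑ ^ (-t))
    (Finset.mem_univ ⟨σ, hσ⟩)
  rw [one_mul]
  exact hle.trans hterm

end Sufficiency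

section CollapsedBox

variable {ι E : Type*} [DecidableEq ι] [NormedAddCommGroup E] {S : Finset ι} {ε r R : ℝ}
  {v : ι → E}

/-- The polydisc of radius `r`, shrunk by the factor `ε` in the coordinates from `S`. -/
def collapsedBox (S : Finset ι) (r ε : ℝ) : Set (ι → E) :=
  Set.univ.pi fun i => Metric.closedBall 0 ((if i ∈ S then ε else 1) * r)

theorem norm_le_of_mem_collapsedBox (hv : v ∈ collapsedBox S r ε) {i : ι} (hi : i ∈ S) :
    ‖v i‖ ≤ ε * r := by
  simpa [hi] using hv i trivial

theorem norm_le_of_mem_collapsedBox_of_le_one (hv : v ∈ collapsedBox S r ε) (hr : 0 ≤ r)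
    (hε : ε ≤ 1) (i : ι) : ‖v i‖ ≤ r := by
  have hi : ‖v i‖ ≤ (if i ∈ S then ε else 1) * r := by simpa using hv i trivial
  exact hi.trans (mul_le_of_le_one_left hr (by split_ifs <;> simp [hε]))

theorem collapsedBox_subset_collapsedBox (hε : 0 ≤ ε) (hrR : r ≤ R) :
    collapsedBox (E := E) S r ε ⊆ collapsedBox S R ε :=
  Set.pi_mono fun _ _ => Metric.closedBall_subset_closedBall (by split_ifs <;> gcongr)

theorem measurableSet_collapsedBox [Countable ι] [MeasurableSpace E] [OpensMeasurableSpace E] :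
    MeasurableSet (collapsedBox (E := E) S r ε) :=
  .univ_pi fun _ => measurableSet_closedBall

variable [Fintype ι]

theorem collapsedBox_subset_closedBall (hr : 0 ≤ r) (hε : ε ≤ 1) :
    collapsedBox S r ε ⊆ Metric.closedBall (0 : ι → E) r := fun _ hv =>
  mem_closedBall_zero_iff.2 <| (pi_norm_le_iff_of_nonneg hr).2 <|
    norm_le_of_mem_collapsedBox_of_le_one hv hr hε

variable [MeasurableSpace E] [BorelSpace E] [NormedSpace ℝ E] [FiniteDimensional ℝ E]
  {μ : Measure E} [μ.IsAddHaarMeasure]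

theorem measure_pi_collapsedBox (hε : 0 ≤ ε) (hr : 0 ≤ r) :
    Measure.pi (fun _ => μ) (collapsedBox S r ε) = ENNReal.ofReal (ε ^ (finrank ℝ E * S.card)) *
      Measure.pi (fun _ => μ) (Metric.closedBall (0 : ι → E) r) := by
  have hball : ∀ i, μ (Metric.closedBall 0 ((if i ∈ S then ε else 1) * r)) =
      (if i ∈ S then ENNReal.ofReal (ε ^ finrank ℝ E) else 1) * μ (Metric.closedBall 0 r) :=
    fun i => by
      rw [Measure.addHaar_closedBall_mul _ _ (by split_ifs <;> positivity) hr]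
      split_ifs <;> simp
  simp only [collapsedBox, closedBall_pi _ hr, Pi.zero_apply, Measure.pi_pi, hball,
    Finset.prod_mul_distrib, Finset.prod_ite_mem, Finset.univ_inter, Finset.prod_const, pow_mul]
  rw [ENNReal.ofReal_pow (by positivity) S.card]

theorem tendsto_measure_pi_collapsedBox [Nontrivial E] (hS : S.Nonempty) (hr : 0 ≤ r) :
    Tendsto (fun ε => Measure.pi (fun _ => μ) (collapsedBox S r ε)) (𝓝[>] 0) (𝓝 0) := by
  have hexp : finrank ℝ E * S.card ≠ 0 := (Nat.mul_pos finrank_pos hS.card_pos).ne'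
  have hpow : Tendsto (fun ε : ℝ => ENNReal.ofReal (ε ^ (finrank ℝ E * S.card))) (𝓝[>] 0)
      (𝓝 0) := by
    have hcont : Continuous fun ε : ℝ => ENNReal.ofReal (ε ^ (finrank ℝ E * S.card)) :=
      ENNReal.continuous_ofReal.comp (continuous_pow _)
    simpa [hexp] using (hcont.tendsto 0).mono_left nhdsWithin_le_nhds
  have hmul := ENNReal.Tendsto.mul_const hpow
    (Or.inr (measure_closedBall_lt_top (μ := Measure.pi fun _ => μ) (x := (0 : ι → E)) (r := r)).ne)
  rw [zero_mul] at hmul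
  refine hmul.congr' ?_
  filter_upwards [self_mem_nhdsWithin] with ε hε
  exact (measure_pi_collapsedBox (le_of_lt hε) hr).symm

theorem measure_closedBall_le_setLIntegral_collapsedBox {f : (ι → E) → ℝ≥0∞} {α : ℝ}
    (hα : finrank ℝ E * S.card ≤ α) (hr : 0 ≤ r) (hε : 0 < ε) (hε₁ : ε ≤ 1)
    (hf : ∀ v ∈ collapsedBox S r ε, ENNReal.ofReal ε ^ (-α) ≤ f v) :
    Measure.pi (fun _ => μ) (Metric.closedBall (0 : ι → E) r) ≤
      ∫⁻ v in collapsedBox S r ε, f v ∂Measure.pi fun _ => μ := by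
  calc Measure.pi (fun _ => μ) (Metric.closedBall 0 r)
      ≤ ENNReal.ofReal (ε ^ (-α) * ε ^ (finrank ℝ E * S.card)) *
          Measure.pi (fun _ => μ) (Metric.closedBall 0 r) := by
        refine le_mul_of_one_le_left' (ENNReal.one_le_ofReal.2 ?_)
        rw [← Real.rpow_natCast, ← Real.rpow_add hε]
        refine Real.one_le_rpow_of_pos_of_le_one_of_nonpos hε hε₁ ?_
        push_cast
        linarith
    _ = ∫⁻ _v in collapsedBox S r ε, ENNReal.ofReal (ε ^ (-α)) ∂Measure.pi fun _ => μ := by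
        rw [setLIntegral_const, measure_pi_collapsedBox hε.le hr,
          ENNReal.ofReal_mul (by positivity), mul_assoc]
    _ ≤ ∫⁻ v in collapsedBox S r ε, f v ∂Measure.pi fun _ => μ :=
        setLIntegral_mono' measurableSet_collapsedBox fun v hv => by
          simpa only [ENNReal.ofReal_rpow_of_pos hε] using hf v hv

theorem not_lintegrableNear_of_rpow_le_on_collapsedBox [Nontrivial E] {f : (ι → E) → ℝ≥0∞} {α : ℝ}
    (hS : S.Nonempty) (hα : finrank ℝ E * S.card ≤ α) (hR : 0 < R)
    (hf : ∀ ε, 0 < ε → ε ≤ 1 → ∀ v ∈ collapsedBox S R ε, ENNReal.ofReal ε ^ (-α) ≤ f v) :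
    ¬ LIntegrableNear (Measure.pi fun _ => μ) f 0 := by
  rintro ⟨s, hs, hfin⟩
  obtain ⟨ρ, hρ, hρs⟩ := Metric.nhds_basis_closedBall.mem_iff.1 hs
  obtain ⟨r, hr, hrρ, hrR⟩ : ∃ r, 0 < r ∧ r ≤ ρ ∧ r ≤ R :=
    ⟨min ρ R, lt_min hρ hR, min_le_left _ _, min_le_right _ _⟩
  set ν := Measure.pi fun _ : ι => μ
  have hvol : Tendsto (fun ε => ν.restrict s (collapsedBox S r ε)) (𝓝[>] 0) (𝓝 0) :=
    tendsto_of_tendsto_of_tendsto_of_le_of_le tendsto_const_nhds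
      (tendsto_measure_pi_collapsedBox hS hr.le) (fun _ => zero_le)
      fun _ => Measure.restrict_apply_le _ _
  refine (Metric.measure_closedBall_pos ν 0 hr).not_ge
    (ge_of_tendsto (tendsto_setLIntegral_zero hfin hvol) ?_)
  filter_upwards [Ioc_mem_nhdsGT one_pos] with ε hε
  have hsub : collapsedBox S r ε ⊆ s := (collapsedBox_subset_closedBall hr.le hε.2).trans
    ((Metric.closedBall_subset_closedBall hrρ).trans hρs)
  rw [Measure.restrict_restrict measurableSet_collapsedBox, Set.inter_eq_left.2 hsub]
  exact measure_closedBall_le_setLIntegral_collapsedBox hα hr.le hε.1 hε.2 fun v hv =>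
    hf ε hε.1 hε.2 v (collapsedBox_subset_collapsedBox hε.1.le hrR hv)

end CollapsedBox

section Necessity

variable {ι κ E : Type*} [DecidableEq ι] [DecidableEq κ] [NormedAddCommGroup E] {a : ℝ}
  {β : κ → ℝ} {c : ι → κ}

theorem ofReal_rpow_neg_le_enorm_rpow_neg {x : E} {ε s : ℝ} (hs : 0 ≤ s) (hx : ‖x‖ ≤ ε) :
    ENNReal.ofReal ε ^ (-s) ≤ ‖x‖ₑ ^ (-s) := by
  rw [← ofReal_norm]
  simp only [ENNReal.rpow_neg]
  gcongr

theorem one_le_enorm_rpow_neg {x : E} {s : ℝ} (hs : 0 ≤ s) (hx : ‖x‖ ≤ 1) : 1 ≤ ‖x‖ₑ ^ (-s) := by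
  simpa using ofReal_rpow_neg_le_enorm_rpow_neg hs hx

theorem ofReal_rpow_le_mul_prod_erase {I : Finset ι} {u : ι → E} {x : E} {y : ℝ≥0∞} {b ε : ℝ}
    (ha : 0 ≤ a) (hε : 0 < ε) (hx : ∀ i ∈ I, ‖u i - x‖ ≤ ε / 2) {i : ι} (hi : i ∈ I)
    (hy : ENNReal.ofReal ε ^ (-b) ≤ y) :
    ENNReal.ofReal ε ^ (-(b + a / 2 * (I.card - 1))) ≤
      y * ∏ j ∈ I.erase i, ‖u i - u j‖ₑ ^ (-(a / 2)) := by
  have hpair : ∀ j ∈ I.erase i, ENNReal.ofReal ε ^ (-(a / 2)) ≤ ‖u i - u j‖ₑ ^ (-(a / 2)) :=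
    fun j hj => by
      refine ofReal_rpow_neg_le_enorm_rpow_neg (by positivity) ?_
      have hxj := hx j (Finset.mem_of_mem_erase hj)
      rw [norm_sub_rev] at hxj
      exact (norm_sub_le_norm_sub_add_norm_sub _ x _).trans (by linarith [hx i hi])
  calc ENNReal.ofReal ε ^ (-(b + a / 2 * (I.card - 1)))
      = ENNReal.ofReal ε ^ (-b) * (ENNReal.ofReal ε ^ (-(a / 2))) ^ (I.erase i).card := by
        rw [← ENNReal.rpow_mul_natCast, ← ENNReal.rpow_add _ _ (by simpa) ENNReal.ofReal_ne_top,
          Finset.cast_card_erase_of_mem hi]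
        ring_nf
    _ ≤ y * ∏ j ∈ I.erase i, ‖u i - u j‖ₑ ^ (-(a / 2)) :=
        mul_le_mul' hy (Finset.pow_card_le_prod _ _ _ hpair)

variable [Fintype ι]

theorem ofReal_rpow_le_clusterDensity {u : ι → E} {x : E} {v : κ} {b ε : ℝ} (ha : 0 ≤ a)
    (hβ : ∀ i, 0 ≤ β (c i)) (hε : 0 < ε) (hu : ∀ i, ‖u i‖ ≤ 1 / 2)
    (hx : ∀ i ∈ cluster c v, ‖u i - x‖ ≤ ε / 2)
    (hb : ∀ i ∈ cluster c v, ENNReal.ofReal ε ^ (-b) ≤ ‖u i‖ₑ ^ (-β v)) :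
    ENNReal.ofReal ε ^ (-((b + a / 2 * ((cluster c v).card - 1)) * (cluster c v).card)) ≤
      clusterDensity a β c u := by
  have hpair : ∀ i j, 1 ≤ ‖u i - u j‖ₑ ^ (-(a / 2)) := fun i j =>
    one_le_enorm_rpow_neg (by positivity) ((norm_sub_le _ _).trans (by linarith [hu i, hu j]))
  have hfactor : ∀ i ∈ cluster c v, ENNReal.ofReal ε ^ (-(b + a / 2 * ((cluster c v).card - 1))) ≤
      ‖u i‖ₑ ^ (-β (c i)) * ∏ j ∈ (cluster c (c i)).erase i, ‖u i - u j‖ₑ ^ (-(a / 2)) :=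
    fun i hi => by
      rw [(Finset.mem_filter_univ _).1 hi]
      exact ofReal_rpow_le_mul_prod_erase ha hε hx hi (hb i hi)
  calc ENNReal.ofReal ε ^ (-((b + a / 2 * ((cluster c v).card - 1)) * (cluster c v).card))
      = (ENNReal.ofReal ε ^ (-(b + a / 2 * ((cluster c v).card - 1)))) ^ (cluster c v).card := by
        rw [← ENNReal.rpow_mul_natCast, neg_mul]
    _ ≤ ∏ i ∈ cluster c v,
          (‖u i‖ₑ ^ (-β (c i)) * ∏ j ∈ (cluster c (c i)).erase i, ‖u i - u j‖ₑ ^ (-(a / 2))) :=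
        Finset.pow_card_le_prod _ _ _ hfactor
    _ ≤ clusterDensity a β c u :=
        Finset.prod_le_prod_of_subset_of_one_le' (Finset.subset_univ _) fun i _ _ =>
          one_le_mul (one_le_enorm_rpow_neg (hβ i) ((hu i).trans (by norm_num)))
            (Finset.one_le_prod' fun j _ => hpair i j)

variable [NormedSpace ℝ E] [FiniteDimensional ℝ E] [Nontrivial E] [MeasurableSpace E]
  [BorelSpace E] {μ : Measure E} [μ.IsAddHaarMeasure]

theorem add_card_sub_one_lt_finrank_of_lintegrableNear_clusterDensity {i : ι} (ha : 0 ≤ a)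
    (hβ : ∀ i, 0 ≤ β (c i))
    (hf : LIntegrableNear (Measure.pi fun _ => μ) (clusterDensity (E := E) a β c) 0) :
    β (c i) + a / 2 * ((cluster c (c i)).card - 1) < finrank ℝ E := by
  by_contra! hle
  have hS : (cluster c (c i)).Nonempty := ⟨i, by simp⟩
  refine not_lintegrableNear_of_rpow_le_on_collapsedBox hS (R := 1 / 2)
    (mul_le_mul_of_nonneg_right hle (Nat.cast_nonneg _)) (by norm_num)
    (fun ε hε hε₁ u hu => ?_) hf
  have hnorm : ∀ j ∈ cluster c (c i), ‖u j‖ ≤ ε / 2 := fun j hj => by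
    simpa [div_eq_mul_inv] using norm_le_of_mem_collapsedBox hu hj
  refine ofReal_rpow_le_clusterDensity (x := 0) ha hβ hε
    (norm_le_of_mem_collapsedBox_of_le_one hu (by norm_num) hε₁) (by simpa using hnorm) ?_
  exact fun j hj => ofReal_rpow_neg_le_enorm_rpow_neg (hβ i) ((hnorm j hj).trans (by linarith))

theorem card_lt_finrank_of_lintegrableNear_clusterDensity {o : ι} (ha : 0 ≤ a)
    (hβ : ∀ i, 0 ≤ β (c i)) (hcard : 1 < (cluster c (c o)).card)
    (hf : LIntegrableNear (Measure.pi fun _ => μ) (clusterDensity (E := E) a β c) 0) :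
    a / 2 * (cluster c (c o)).card < finrank ℝ E := by
  by_contra! hle
  have ho : o ∈ cluster c (c o) := by simp
  have hS : ((cluster c (c o)).erase o).Nonempty := by
    rw [← Finset.card_pos, Finset.card_erase_of_mem ho]
    omega
  -- In sheared coordinates the cluster collapses onto its member `o`, which stays free.
  let σ : ι → ι := fun i => if i ∈ cluster c (c o) then o else i
  have hσ : ∀ i, σ (σ i) = σ i := fun i => by simp only [σ]; split_ifs <;> simp_all
  let L : (ι → E) ≃L[ℝ] (ι → E) := (shear ℝ σ hσ).symm
  have hα : (finrank ℝ E : ℝ) * ((cluster c (c o)).erase o).card ≤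
      (0 + a / 2 * ((cluster c (c o)).card - 1)) * (cluster c (c o)).card := by
    rw [Finset.cast_card_erase_of_mem ho, zero_add, mul_right_comm]
    gcongr
    rw [sub_nonneg]
    exact_mod_cast hcard.le
  refine not_lintegrableNear_of_rpow_le_on_collapsedBox hS (R := 1 / 4) hα (by norm_num)
    (fun ε hε hε₁ u hu => ?_) (LIntegrableNear.comp_continuousLinearEquiv L (by rwa [map_zero]))
  have hu₁ : ∀ i, ‖u i‖ ≤ 1 / 4 :=
    norm_le_of_mem_collapsedBox_of_le_one hu (by norm_num) hε₁
  have hLo : L u o = u o := by simp [L, σ, shear_symm_apply]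
  have hLi : ∀ i ∈ cluster c (c o), i ≠ o → L u i = u i + u o := fun i hi hio => by
    simp only [L, σ, shear_symm_apply, if_pos hi, if_neg hio.symm]
  have hLu : ∀ i, ‖L u i‖ ≤ 1 / 2 := fun i => by
    simp only [L, shear_symm_apply]
    split_ifs
    · linarith [hu₁ i]
    · linarith [norm_add_le (u i) (u (σ i)), hu₁ i, hu₁ (σ i)]
  refine ofReal_rpow_le_clusterDensity (x := L u o) ha hβ hε hLu (fun i hi => ?_) fun i _ => ?_
  · rcases eq_or_ne i o with rfl | hio
    · simpa using (half_pos hε).le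
    · rw [hLi i hi hio, hLo, add_sub_cancel_right]
      linarith [norm_le_of_mem_collapsedBox hu (Finset.mem_erase.2 ⟨hio, hi⟩)]
  · simpa using one_le_enorm_rpow_neg (hβ o) ((hLu i).trans (by norm_num))

end Necessity

section GibbsDensity

variable {ι E : Type*} [Fintype ι] [DecidableEq ι] [NormedAddCommGroup E] {a : ℝ}
  {Q : Finset E} {b : E → ℝ}

/-- The unnormalized Gibbs density on configurations of points in `E`: distinct points interact
with exponent `a`, and `b q` is the exponent of the weight at `q ∈ Q`. Each unordered pair occurs
twice, hence the exponent `a / 2`. -/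
noncomputable def gibbsDensity (a : ℝ) (Q : Finset E) (b : E → ℝ) (z : ι → E) : ℝ≥0∞ :=
  ∏ i, ((∏ q ∈ Q, ‖z i - q‖ₑ ^ (-b q)) * ∏ j ∈ Finset.univ.erase i, ‖z i - z j‖ₑ ^ (-(a / 2)))

/-- The product of the factors of `gibbsDensity` that stay regular near the configuration `p`. -/
noncomputable def gibbsRegularFactor [DecidableEq E] (a : ℝ) (Q : Finset E) (b : E → ℝ)
    (p z : ι → E) : ℝ≥0∞ :=
  ∏ i, ((∏ q ∈ Q.erase (p i), ‖z i - q‖ₑ ^ (-b q)) *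
    ∏ j ∈ Finset.univ.erase i \ cluster p (p i), ‖z i - z j‖ₑ ^ (-(a / 2)))

theorem isRegularAt_gibbsRegularFactor [DecidableEq E] (p : ι → E) :
    IsRegularAt (gibbsRegularFactor a Q b p) p := by
  refine .finset_prod fun i _ => .mul (.finset_prod fun q hq => ?_) (.finset_prod fun j hj => ?_)
  · exact isRegularAt_enorm_rpow (g := fun z : ι → E => z i - q)
      ((continuous_apply i).sub continuous_const).continuousAt
      (sub_ne_zero.2 (Finset.ne_of_mem_erase hq).symm) _
  · have hij : p j ≠ p i := by simpa using (Finset.mem_sdiff.1 hj).2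
    exact isRegularAt_enorm_rpow (g := fun z : ι → E => z i - z j) (by fun_prop)
      (sub_ne_zero.2 hij.symm) _

theorem gibbsDensity_eq_clusterDensity_mul [DecidableEq E] (p z : ι → E) :
    gibbsDensity a Q b z =
      clusterDensity a ((Q : Set E).indicator b) p (z - p) * gibbsRegularFactor a Q b p z := by
  rw [gibbsDensity, clusterDensity, gibbsRegularFactor, ← Finset.prod_mul_distrib]
  refine Finset.prod_congr rfl fun i _ => ?_
  rw [mul_mul_mul_comm]
  congr 1
  · by_cases hi : p i ∈ Q
    · simp [hi, ← Finset.mul_prod_erase Q _ hi]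
    · simp [hi]
  · have hsub : (cluster p (p i)).erase i ⊆ Finset.univ.erase i :=
      Finset.erase_subset_erase _ (Finset.subset_univ _)
    have hsdiff : Finset.univ.erase i \ (cluster p (p i)).erase i =
        Finset.univ.erase i \ cluster p (p i) := by
      ext j
      simp +contextual
    rw [← Finset.prod_sdiff hsub, mul_comm, hsdiff]
    congr 1
    refine Finset.prod_congr rfl fun j hj => ?_
    have hj : p j = p i := by simpa using Finset.mem_of_mem_erase hj
    simp [hj]

variable [MeasurableSpace E] [BorelSpace E] [NormedSpace ℝ E] [FiniteDimensional ℝ E]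
  {μ : Measure E} [μ.IsAddHaarMeasure]

theorem lintegrableNear_gibbsDensity_iff [DecidableEq E] (p : ι → E) :
    LIntegrableNear (Measure.pi fun _ => μ) (gibbsDensity a Q b) p ↔
      LIntegrableNear (Measure.pi fun _ => μ)
        (clusterDensity (E := E) a ((Q : Set E).indicator b) p) 0 := by
  have hreg := isRegularAt_gibbsRegularFactor (a := a) (Q := Q) (b := b) p
  rw [funext (gibbsDensity_eq_clusterDensity_mul p), lintegrableNear_mul_iff hreg,
    lintegrableNear_comp_sub_iff]

end GibbsDensity

theorem prod_filter_lt_eq_prod_prod_erase {ι M : Type*} [Fintype ι] [LinearOrder ι]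
    [LocallyFiniteOrderTop ι] [LocallyFiniteOrderBot ι] [CommMonoid M] (f : ι → ι → M) :
    ∏ k : ι × ι with k.1 < k.2, f k.2 k.1 * f k.1 k.2 = ∏ i, ∏ j ∈ Finset.univ.erase i, f j i := by
  simp only [Finset.prod_filter, Fintype.prod_prod_type, ← Finset.compl_singleton,
    ← Finset.prod_prod_Ioi_mul_eq_prod_prod_off_diag, ← Finset.filter_lt_eq_Ioi]

theorem gibbsDensity_eq_prod_lt_mul {ι E : Type*} [Fintype ι] [LinearOrder ι]
    [LocallyFiniteOrderTop ι] [LocallyFiniteOrderBot ι] [NormedAddCommGroup E] (a : ℝ)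
    (Q : Finset E) (b : E → ℝ) (z : ι → E) :
    gibbsDensity a Q b z = (∏ k : ι × ι with k.1 < k.2, ‖z k.1 - z k.2‖ₑ ^ (-a)) *
      ∏ i, ∏ q ∈ Q, ‖z i - q‖ₑ ^ (-b q) := by
  have hsq : ∀ x : E, ‖x‖ₑ ^ (-(a / 2)) * ‖x‖ₑ ^ (-(a / 2)) = ‖x‖ₑ ^ (-a) := fun x => by
    rw [← pow_two, ← ENNReal.rpow_mul_natCast]
    congr 1
    push_cast
    ring
  have hpairs := prod_filter_lt_eq_prod_prod_erase fun i j => ‖z j - z i‖ₑ ^ (-(a / 2))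
  simp only [enorm_sub_rev (z _) (z (Prod.fst _)), hsq] at hpairs
  rw [gibbsDensity, Finset.prod_mul_distrib, mul_comm, hpairs]

theorem gibbsDensity_pair {N : ℕ} {E : Type*} [NormedAddCommGroup E] [DecidableEq E] {q₀ q₁ : E}
    (hq : q₀ ≠ q₁) (a s : ℝ) (z : Fin N → E) :
    gibbsDensity a {q₀, q₁} (fun _ => s) z =
      (∏ k : Fin N × Fin N with k.1 < k.2, ENNReal.ofReal ‖z k.1 - z k.2‖ ^ (-a)) *
        ∏ i, ENNReal.ofReal (‖z i - q₀‖ * ‖z i - q₁‖) ^ (-s) := by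
  simp only [gibbsDensity_eq_prod_lt_mul, Finset.prod_pair hq, ofReal_norm,
    ENNReal.ofReal_mul (norm_nonneg _), ENNReal.mul_rpow_of_ne_top enorm_ne_top enorm_ne_top]

section Threshold

variable {ι E : Type*} [Fintype ι] [DecidableEq ι] [NormedAddCommGroup E] [NormedSpace ℝ E]
  [FiniteDimensional ℝ E] [Nontrivial E] [MeasurableSpace E] [BorelSpace E] {μ : Measure E}
  [μ.IsAddHaarMeasure] {a : ℝ} {Q : Finset E} {b : E → ℝ}

theorem lintegrableNear_gibbsDensity [DecidableEq E] {p : ι → E} (ha : 0 ≤ a)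
    (hcard : a / 2 * Fintype.card ι < finrank ℝ E)
    (hb : ∀ q ∈ Q, b q + a / 2 * ((cluster p q).card - 1) < finrank ℝ E) :
    LIntegrableNear (Measure.pi fun _ => μ) (gibbsDensity a Q b) p := by
  have hcluster : ∀ i, a / 2 * (cluster p (p i)).card < finrank ℝ E := fun i =>
    hcard.trans_le' (by gcongr; exact Finset.card_le_univ _)
  refine (lintegrableNear_gibbsDensity_iff p).2 (lintegrableNear_clusterDensity ha hcluster ?_)
  intro i
  by_cases hi : p i ∈ Q
  · simpa [hi] using hb _ hi
  · simp only [Finset.mem_coe, hi, not_false_eq_true, Set.indicator_of_notMem]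
    linarith [hcluster i]

theorem card_univ_lt_finrank_of_lintegrableNear_gibbsDensity {x : E} (ha : 0 ≤ a)
    (hι : 1 < Fintype.card ι) (hx : x ∉ Q)
    (hf : LIntegrableNear (Measure.pi fun _ => μ) (gibbsDensity a Q b) fun _ : ι => x) :
    a / 2 * Fintype.card ι < finrank ℝ E := by
  classical
  obtain ⟨o⟩ : Nonempty ι := Fintype.card_pos_iff.1 (by omega)
  have hc : cluster (fun _ : ι => x) x = Finset.univ := by simp [cluster]
  simpa [hc] using card_lt_finrank_of_lintegrableNear_clusterDensity (o := o) ha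
    (by simp [hx]) (by simpa [hc] using hι) ((lintegrableNear_gibbsDensity_iff _).1 hf)

theorem add_card_sub_one_lt_finrank_of_lintegrableNear_gibbsDensity {q x : E} {S : Finset ι}
    (ha : 0 ≤ a) (hq : q ∈ Q) (hbq : 0 ≤ b q) (hx : x ∉ Q) (hS : S.Nonempty)
    (hf : LIntegrableNear (Measure.pi fun _ => μ) (gibbsDensity a Q b)
      fun i => if i ∈ S then q else x) :
    b q + a / 2 * (S.card - 1) < finrank ℝ E := by
  classical
  obtain ⟨i, hi⟩ := hS
  have hqx : x ≠ q := fun h => hx (h ▸ hq)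
  have hc : cluster (fun i => if i ∈ S then q else x) q = S := by ext j; simp [cluster, hqx]
  have := add_card_sub_one_lt_finrank_of_lintegrableNear_clusterDensity (i := i) ha
    (fun j => by by_cases hj : j ∈ S <;> simp [hj, hx, hq, hbq])
    ((lintegrableNear_gibbsDensity_iff _).1 hf)
  simpa [hi, hc, hq] using this

end Threshold

theorem lt_min_threshold_iff_s4 {n m w γ : ℝ} (hn : 1 < n) (hm : 1 < m) (hw : w < 1) :
    γ < min (2 * (1 - 1 / n) / (2 - 2 * w)) ((n - 1) / (m - 1)) ↔
      2 * γ / ((n - 1) / (2 - 2 * w)) / 2 * n < 2 ∧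
        2 * w + 2 * γ / ((n - 1) / (2 - 2 * w)) / 2 * (m - 1) < 2 := by
  have hV : 0 < 2 - 2 * w := by linarith
  have hn₁ : 0 < n - 1 := by linarith
  have hm₁ : 0 < m - 1 := by linarith
  have hn₀ : 0 < n := by linarith
  have ha : 2 * γ / ((n - 1) / (2 - 2 * w)) / 2 = γ * (2 - 2 * w) / (n - 1) := by field_simp
  rw [lt_min_iff, ha, ← lt_sub_iff_add_lt', div_mul_eq_mul_div, div_lt_iff₀ hn₁,
    div_mul_eq_mul_div, div_lt_iff₀ hn₁]
  refine and_congr ?_ ?_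
  · rw [lt_div_iff₀ hV, ← lt_div_iff₀ hn₀]
    field_simp
  · rw [lt_div_iff₀ hm₁, mul_right_comm, mul_comm (2 - 2 * w), mul_lt_mul_iff_of_pos_right hV]

theorem reduced_microscopic_threshold_log_fano_curve_general {ι E : Type*} [Fintype ι]
    [DecidableEq ι] [NormedAddCommGroup E] [NormedSpace ℝ E] [FiniteDimensional ℝ E] [Nontrivial E]
    [DecidableEq E] [MeasurableSpace E] [BorelSpace E] (μ : Measure E) [μ.IsAddHaarMeasure]
    {a : ℝ} (ha : 0 ≤ a) (Q : Finset E) (b : E → ℝ) {m : ℕ} (hι : 1 < Fintype.card ι)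
    (hm : 1 ≤ m) (hmι : m ≤ Fintype.card ι) :
    (∀ p : ι → E, (∀ q ∈ Q, (cluster p q).card ≤ m) →
        LIntegrableNear (Measure.pi fun _ => μ) (gibbsDensity a Q b) p) ↔
      a / 2 * Fintype.card ι < finrank ℝ E ∧ ∀ q ∈ Q, b q + a / 2 * (m - 1) < finrank ℝ E := by
  refine ⟨fun h => ?_, fun ⟨hcard, hb⟩ p hp => lintegrableNear_gibbsDensity ha hcard ?_⟩
  · have : Infinite E := Module.Free.infinite ℝ E
    obtain ⟨x, hx⟩ := Infinite.exists_notMem_finset Q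
    have hcard : a / 2 * Fintype.card ι < finrank ℝ E := by
      refine card_univ_lt_finrank_of_lintegrableNear_gibbsDensity ha hι hx (h _ fun q hq => ?_)
      have hxq : x ≠ q := fun h => hx (h ▸ hq)
      simp [cluster, hxq]
    refine ⟨hcard, fun q hq => ?_⟩
    rcases lt_or_ge (b q) 0 with hbq | hbq
    · have hle : a / 2 * (m - 1) ≤ a / 2 * Fintype.card ι := by
        gcongr
        exact (sub_le_self _ zero_le_one).trans (by exact_mod_cast hmι)
      linarith
    · obtain ⟨S, -, rfl⟩ := Finset.exists_subset_card_eq (s := (Finset.univ : Finset ι)) hmι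
      refine add_card_sub_one_lt_finrank_of_lintegrableNear_gibbsDensity ha hq hbq hx
        (Finset.card_pos.1 hm) (h _ fun q' hq' => ?_)
      have hxq' : x ≠ q' := fun h => hx (h ▸ hq')
      exact Finset.card_le_card fun i hi => by by_contra hiS; simp [hiS, hxq'] at hi
  · intro q hq
    refine (hb q hq).trans_le' ?_
    gcongr
    exact hp q hq

/-- **Reduced microscopic stability threshold of `(ℙ¹, Δ_w)`.** Let `w ∈ (0,1)`, `V = 2-2w`,
`N ≥ 4`, `k = (N-1)/V`, `q₀ ≠ q₁` and `γ > 0`. The function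
`z ↦ ∏_{i<j} |z_i-z_j|^(-2γ/k) · ∏_i (|z_i-q₀||z_i-q₁|)^(-2w)` is integrable near every point
`p ∈ ℂ^N` with at most `⌊N/2⌋` coordinates at `q₀` and at most `⌊N/2⌋` at `q₁`, if and only
if `γ < min( 2(1-1/N)/V , (N-1)/(⌊N/2⌋-1) )`. -/
theorem reduced_microscopic_threshold_log_fano_curve (w : ℝ) (hw : w ∈ Set.Ioo (0 : ℝ) 1)
    (N : ℕ) (hN : 4 ≤ N) (q₀ q₁ : ℂ) (hq : q₀ ≠ q₁) (γ : ℝ) (hγ : 0 < γ) :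
    (∀ p : Fin N → ℂ,
        (Finset.univ.filter fun i => p i = q₀).card ≤ N / 2 →
        (Finset.univ.filter fun i => p i = q₁).card ≤ N / 2 →
        ∃ s ∈ 𝓝 p,
          (∫⁻ z in s,
            (∏ a ∈ Finset.univ.filter (fun a : Fin N × Fin N => a.1 < a.2),
              (ENNReal.ofReal ‖z a.1 - z a.2‖) ^
                (-(2 * γ / (((N : ℝ) - 1) / (2 - 2 * w))))) *
            ∏ i, (ENNReal.ofReal (‖z i - q₀‖ * ‖z i - q₁‖)) ^ (-(2 * w)) ∂volume) ≠ ∞) ↔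
      γ < min (2 * (1 - 1 / (N : ℝ)) / (2 - 2 * w))
          (((N : ℝ) - 1) / (((N / 2 : ℕ) : ℝ) - 1)) := by
  have hN₁ : (1 : ℝ) < N := by exact_mod_cast (by omega : 1 < N)
  have hm : 2 ≤ N / 2 := by omega
  have hm₁ : (1 : ℝ) < (N / 2 : ℕ) := by exact_mod_cast hm
  have ha : 0 ≤ 2 * γ / (((N : ℝ) - 1) / (2 - 2 * w)) := by
    have := sub_pos.2 hN₁
    have : 0 < 2 - 2 * w := by linarith [hw.2]
    positivity
  have hgeneral := reduced_microscopic_threshold_log_fano_curve_general (ι := Fin N) (m := N / 2)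
    volume ha {q₀, q₁} (fun _ => 2 * w) (by simp; omega) (by omega) (by simp; omega)
  rw [lt_min_threshold_iff_s4 hN₁ hm₁ hw.2]
  simpa [LIntegrableNear, cluster, gibbsDensity_pair hq, volume_pi] using hgeneral
end
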